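/- Let P be a proper real-rational n×n transfer matrix that is negative imaginary (NI, possibly with a pole at the origin), let C be strictly negative imaginary (SNI), and let Ψ be a real symmetric negative-definite matrix such that the largest eigenvalue of P(∞)Ψ is less than 1. Then the positive feedback interconnection [P,C] is stable if and only if: (a) I − P(∞)C(∞) is nonsingular; (b) the largest eigenvalue of (I − P(∞)C(∞))^{-1}(P(∞)C(0) − I) is negative; and (c) the largest eigenvalue of lim_{s→0} (I − Ψ P(∞))(I − C(s)P(∞))^{-1}(C(s)P(s) − I)(I − Ψ P(s))^{-1} is negative. -/

import Mathlib

open Matrix Polynomial Filter Topology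
open scoped ComplexOrder

noncomputable section

namespace NIControl

/-- Evaluate a real-rational function at a complex point (junk value at poles). -/
def evalC (f : RatFunc ℝ) (s : ℂ) : ℂ :=
  f.eval (algebraMap ℝ ℂ) s

/-- `s` is a pole of the real-rational function `f`
(the reduced denominator vanishes at `s`). -/
def IsPoleAt (f : RatFunc ℝ) (s : ℂ) : Prop :=
  f.denom.eval₂ (algebraMap ℝ ℂ) s = 0

variable {n : ℕ}

/-- Pointwise evaluation of a real-rational transfer matrix at a complex point. -/
def evalM (G : Matrix (Fin n) (Fin n) (RatFunc ℝ)) (s : ℂ) : Matrix (Fin n) (Fin n) ℂ :=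
  Matrix.of fun i j => evalC (G i j) s

/-- Pointwise evaluation of a real-rational transfer matrix at a real point. -/
def evalR (G : Matrix (Fin n) (Fin n) (RatFunc ℝ)) (x : ℝ) : Matrix (Fin n) (Fin n) ℝ :=
  Matrix.of fun i j => (G i j).eval (RingHom.id ℝ) x

/-- Value at `s = ∞` of a proper real-rational function. -/
def atInfinity (f : RatFunc ℝ) : ℝ :=
  if f.num.degree = f.denom.degree then f.num.leadingCoeff / f.denom.leadingCoeff else 0

/-- The instantaneous gain `G(∞)` of a proper real-rational transfer matrix. -/
def evalInf (G : Matrix (Fin n) (Fin n) (RatFunc ℝ)) : Matrix (Fin n) (Fin n) ℝ :=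
  Matrix.of fun i j => atInfinity (G i j)

/-- The matrix `G` has a pole at `s`. -/
def HasPole (G : Matrix (Fin n) (Fin n) (RatFunc ℝ)) (s : ℂ) : Prop :=
  ∃ i j, IsPoleAt (G i j) s

/-- All entries of `G` are proper rational functions. -/
def Proper (G : Matrix (Fin n) (Fin n) (RatFunc ℝ)) : Prop :=
  ∀ i j, (G i j).num.degree ≤ (G i j).denom.degree

/-- All entries of `G` are strictly proper rational functions. -/
def StrictlyProper (G : Matrix (Fin n) (Fin n) (RatFunc ℝ)) : Prop :=
  ∀ i j, (G i j).num.degree < (G i j).denom.degree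

/-- The pole of `G` at the origin (if any) is at most simple. -/
def NoDoubleOriginPole (G : Matrix (Fin n) (Fin n) (RatFunc ℝ)) : Prop :=
  ∀ i j, (G i j).denom.rootMultiplicity 0 ≤ 1

/-- Membership in `RH∞`: proper and no poles in the closed right-half complex plane. -/
def MemRHinf {m : Type*} [Fintype m] (G : Matrix m m (RatFunc ℝ)) : Prop :=
  (∀ i j, (G i j).num.degree ≤ (G i j).denom.degree) ∧
  ∀ s : ℂ, 0 ≤ s.re → ∀ i j, ¬ IsPoleAt (G i j) s

/-- The point `jω` on the imaginary axis. -/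
def jw (ω : ℝ) : ℂ := Complex.I * (ω : ℂ)

/-- The negative-imaginary frequency kernel `j (M − M*)`. -/
def niKer (M : Matrix (Fin n) (Fin n) ℂ) : Matrix (Fin n) (Fin n) ℂ :=
  Complex.I • (M - Mᴴ)

/-- Negative imaginary (NI) real-rational transfer matrix. -/
def IsNI (G : Matrix (Fin n) (Fin n) (RatFunc ℝ)) : Prop :=
  Proper G ∧
  (∀ s : ℂ, 0 < s.re → ¬ HasPole G s) ∧
  (∀ ω : ℝ, 0 < ω → ¬ HasPole G (jw ω) → (niKer (evalM G (jw ω))).PosSemidef) ∧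
  (∀ ω : ℝ, 0 < ω → HasPole G (jw ω) →
    ∃ R : Matrix (Fin n) (Fin n) ℂ, R.PosSemidef ∧
      Tendsto (fun s : ℂ => (s - jw ω) • Complex.I • evalM G s) (𝓝[≠] jw ω) (𝓝 R)) ∧
  (HasPole G 0 →
    (∀ k : ℕ, 3 ≤ k → Tendsto (fun s : ℂ => s ^ k • evalM G s) (𝓝[≠] 0) (𝓝 0)) ∧
    ∃ R : Matrix (Fin n) (Fin n) ℂ, R.PosSemidef ∧
      Tendsto (fun s : ℂ => s ^ 2 • evalM G s) (𝓝[≠] 0) (𝓝 R))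

/-- Strictly negative imaginary (SNI) real-rational transfer matrix. -/
def IsSNI (G : Matrix (Fin n) (Fin n) (RatFunc ℝ)) : Prop :=
  MemRHinf G ∧ ∀ ω : ℝ, 0 < ω → (niKer (evalM G (jw ω))).PosDef

/-- Positive real (passive) real-rational transfer matrix. -/
def IsPositiveReal (G : Matrix (Fin n) (Fin n) (RatFunc ℝ)) : Prop :=
  MemRHinf G ∧ ∀ ω : ℝ, 0 ≤ ω → (evalM G (jw ω) + (evalM G (jw ω))ᴴ).PosSemidef

/-- Output strictly passive real-rational transfer matrix. -/
def IsOSP (G : Matrix (Fin n) (Fin n) (RatFunc ℝ)) : Prop :=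
  MemRHinf G ∧ ∃ ε : ℝ, 0 < ε ∧ ∀ ω : ℝ, 0 ≤ ω →
    (evalM G (jw ω) + (evalM G (jw ω))ᴴ -
      (ε : ℂ) • ((evalM G (jw ω))ᴴ * evalM G (jw ω))).PosSemidef

/-- Stability of the positive feedback interconnection `[P, C]`:
`[I; C] (I − P C)⁻¹ [I, P] ∈ RH∞`. -/
def FeedbackStable (P C : Matrix (Fin n) (Fin n) (RatFunc ℝ)) : Prop :=
  ((1 : Matrix (Fin n) (Fin n) (RatFunc ℝ)) - P * C).det ≠ 0 ∧
  MemRHinf (Matrix.fromBlocks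
    (1 - P * C)⁻¹ ((1 - P * C)⁻¹ * P)
    (C * (1 - P * C)⁻¹) (C * (1 - P * C)⁻¹ * P))

/-- All eigenvalues of the complex matrix `M` are real and less than `c`. -/
def eigsRealAndLT (M : Matrix (Fin n) (Fin n) ℂ) (c : ℝ) : Prop :=
  ∀ μ ∈ spectrum ℂ M, μ.im = 0 ∧ μ.re < c

/-- The (real) eigenvalues of the real matrix `M` are all real and its largest
eigenvalue is less than `c`. -/
def maxEigLT (M : Matrix (Fin n) (Fin n) ℝ) (c : ℝ) : Prop :=
  eigsRealAndLT (M.map (Complex.ofReal)) c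

/-- Loewner order `A ≤ B` on real matrices. -/
def LoewnerLE (A B : Matrix (Fin n) (Fin n) ℝ) : Prop := (B - A).PosSemidef

/-- Strict Loewner order `A < B` on real matrices. -/
def LoewnerLT (A B : Matrix (Fin n) (Fin n) ℝ) : Prop := (B - A).PosDef

section part1

/-- Maximum principle for the right half plane. -/
theorem re_nonneg_of_boundary (f : ℂ → ℂ)
    (h1 : DifferentiableOn ℂ f {s : ℂ | 0 < s.re})
    (h2 : {ω : ℝ | (f (jw ω)).re < 0}.Finite)
    (h3 : ∀ ω : ℝ, ∃ (r : ℝ) (l : ℂ), 0 ≤ r ∧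
      Tendsto (fun s => f s - r / (s - jw ω)) (𝓝[≠] (jw ω)) (𝓝 l))
    (h4 : ∃ l, Tendsto f (Bornology.cobounded ℂ) (𝓝 l)) :
    ∀ s : ℂ, 0 < s.re → 0 ≤ (f s).re := by
  have hjwc : Continuous jw := by unfold jw; fun_prop
  have hjwinj : Function.Injective jw := by
    intro a b h; simpa [jw] using h
  have hU : IsOpen {s : ℂ | 0 < s.re} := isOpen_lt continuous_const Complex.continuous_re
  -- local boundary bound
  have hloc : ∀ ε > 0, ∀ ω : ℝ, ∀ᶠ s in 𝓝 (jw ω), 0 < s.re → -ε < (f s).re := by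
    intro ε hε ω
    obtain ⟨r, l, hr, hl⟩ := h3 ω
    have hT : Tendsto jw (𝓝[≠] ω) (𝓝[≠] (jw ω)) := by
      refine tendsto_nhdsWithin_iff.2 ⟨(hjwc.continuousAt.tendsto).mono_left nhdsWithin_le_nhds, ?_⟩
      filter_upwards [self_mem_nhdsWithin] with a ha h using ha (hjwinj h)
    have hl0 : 0 ≤ l.re := by
      have h5 := (Complex.continuous_re.tendsto l).comp (hl.comp hT)
      refine ge_of_tendsto h5 ?_
      have hfin : ∀ᶠ w in 𝓝[≠] ω, w ∉ {ω : ℝ | (f (jw ω)).re < 0} := by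
        have := (h2.subset (Set.sdiff_subset (t := {ω}))).isClosed.isOpen_compl.mem_nhds
          (show ω ∈ ({ω : ℝ | (f (jw ω)).re < 0} \ {ω})ᶜ by simp)
        filter_upwards [mem_nhdsWithin_of_mem_nhds this, self_mem_nhdsWithin] with w hw hw2 hw3
        exact hw ⟨hw3, hw2⟩
      filter_upwards [hfin, self_mem_nhdsWithin] with w hw hw2
      have hw : ¬ (f (jw w)).re < 0 := hw
      have hz : ((r : ℂ) / (jw w - jw ω)).re = 0 := by
        have : jw w - jw ω = Complex.I * ((w - ω : ℝ) : ℂ) := by simp [jw]; ring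
        rw [this, Complex.div_re]; simp
      simp only [Function.comp, Complex.sub_re, hz]
      linarith
    have h6 := (Complex.continuous_re.tendsto l).comp hl
    have h7 : ∀ᶠ s in 𝓝[≠] (jw ω), -ε < (f s - r / (s - jw ω)).re :=
      h6.eventually (lt_mem_nhds (show -ε < l.re by linarith))
    rw [eventually_nhdsWithin_iff] at h7
    filter_upwards [h7] with s hs hs0
    have hne : s ∈ ({jw ω}ᶜ : Set ℂ) := by
      rintro rfl; simp [jw] at hs0
    have h8 := hs hne
    have h9 : 0 ≤ ((r : ℂ) / (s - jw ω)).re := by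
      rw [Complex.div_re]
      have : (s - jw ω).re = s.re := by simp [jw]
      rw [this]; simp
      apply div_nonneg (mul_nonneg hr hs0.le) (Complex.normSq_nonneg _)
    simp only [Complex.sub_re] at h8
    linarith
  have hinf : ∀ ε > 0, ∀ᶠ s in Bornology.cobounded ℂ, -ε < (f s).re := by
    intro ε hε
    obtain ⟨l, hl⟩ := h4
    have hTj : Tendsto jw atTop (Bornology.cobounded ℂ) := by
      rw [← tendsto_norm_atTop_iff_cobounded]
      have : (fun x => ‖jw x‖) = fun x : ℝ => |x| := by ext x; simp [jw]
      rw [this]; exact tendsto_abs_atTop_atTop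
    have hl0 : 0 ≤ l.re := by
      refine ge_of_tendsto ((Complex.continuous_re.tendsto l).comp (hl.comp hTj)) ?_
      obtain ⟨B, hB⟩ := h2.bddAbove
      filter_upwards [eventually_gt_atTop B] with w hw
      by_contra hcon
      exact absurd (hB (show w ∈ {ω : ℝ | (f (jw ω)).re < 0} from not_le.1 hcon)) (not_le.2 hw)
    exact ((Complex.continuous_re.tendsto l).comp hl).eventually
      (lt_mem_nhds (show -ε < l.re by linarith))
  by_contra hcon
  push Not at hcon
  obtain ⟨s1, hs1, hf1⟩ := hcon
  set ε := -(f s1).re with hε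
  have hεpos : 0 < ε := by linarith
  -- the sublevel set is compact
  let A : Set ℂ := {s | 0 < s.re ∧ (f s).re ≤ -ε}
  have hAclosed : IsClosed A := by
    rw [← isOpen_compl_iff, isOpen_iff_mem_nhds]
    intro s hs
    rcases lt_trichotomy s.re 0 with h | h | h
    · filter_upwards [(isOpen_lt Complex.continuous_re continuous_const).mem_nhds h] with z hz hzA
      exact absurd hzA.1 (not_lt.2 (le_of_lt hz))
    · have : s = jw s.im := by apply Complex.ext <;> simp [jw, h]
      rw [this]
      filter_upwards [hloc ε hεpos s.im] with z hz hzA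
      exact absurd (hz hzA.1) (not_lt.2 hzA.2)
    · have h0 : -ε < (f s).re := by
        by_contra hc; exact hs ⟨h, not_lt.1 hc⟩
      have hc : ContinuousAt f s := (h1.differentiableAt (hU.mem_nhds h)).continuousAt
      filter_upwards [(Complex.continuous_re.continuousAt.comp hc).eventually (lt_mem_nhds h0)]
        with z hz hzA
      exact absurd hz (not_lt.2 hzA.2)
  have hAbdd : Bornology.IsBounded A := by
    have := hinf ε hεpos
    rw [← Bornology.isCobounded_compl_iff]
    refine Filter.mem_of_superset this ?_
    intro z hz hzA
    exact absurd hz (not_lt.2 hzA.2)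
  have hAc : IsCompact A := Metric.isCompact_of_isClosed_isBounded hAclosed hAbdd
  have hAne : A.Nonempty := ⟨s1, hs1, by simp [hε]⟩
  have hcont : ContinuousOn (fun s => (f s).re) A :=
    Complex.continuous_re.comp_continuousOn (h1.continuousOn.mono fun z hz => hz.1)
  obtain ⟨s2, hs2, hmin⟩ := hAc.exists_isMinOn hAne hcont
  have hmin' : ∀ z : ℂ, 0 < z.re → (f s2).re ≤ (f z).re := by
    intro z hz
    by_cases hzA : z ∈ A
    · exact hmin hzA
    · have : -ε < (f z).re := by
        by_contra hc; exact hzA ⟨hz, not_lt.1 hc⟩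
      linarith [hs2.2]
  have hconn : IsPreconnected {s : ℂ | 0 < s.re} := (convex_halfSpace_re_gt 0).isPreconnected
  have hmax : IsMaxOn (norm ∘ fun s => Complex.exp (-f s)) {s : ℂ | 0 < s.re} s2 := by
    intro z hz
    simp only [Set.mem_ofPred_eq, Function.comp, Complex.norm_exp, Complex.neg_re]
    exact Real.exp_le_exp.2 (neg_le_neg (hmin' z hz))
  have heq := Complex.norm_eqOn_of_isPreconnected_of_isMaxOn hconn hU
    (h1.neg.cexp) hs2.1 hmax
  obtain ⟨z, hz, hzf⟩ : ∃ z : ℂ, 0 < z.re ∧ -ε < (f z).re := by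
    have h := hloc ε hεpos 0
    have h' : ∀ᶠ x : ℝ in 𝓝[>] (0:ℝ), (0 < ((x:ℂ)).re → -ε < (f (x:ℂ)).re) := by
      have hT : Tendsto (fun x : ℝ => (x : ℂ)) (𝓝[>] 0) (𝓝 (jw 0)) := by
        have : jw 0 = ((0:ℝ):ℂ) := by simp [jw]
        rw [this]
        exact (Complex.continuous_ofReal.tendsto 0).mono_left nhdsWithin_le_nhds
      exact hT.eventually h
    obtain ⟨x, hx, hx0⟩ := (h'.and self_mem_nhdsWithin).exists
    have : (0:ℝ) < x := hx0
    exact ⟨x, by simpa using this, hx (by simpa using this)⟩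
  have := heq hz
  simp only [Function.comp, Complex.norm_exp, Function.const, Pi.neg_apply, Complex.neg_re] at this
  have := Real.exp_injective this
  linarith [hs2.2]

theorem jw_continuous : Continuous jw := by unfold jw; fun_prop

theorem jw_injective : Function.Injective jw := by
  intro a b h; simpa [jw] using h

theorem tendsto_jw (ω : ℝ) : Tendsto jw (𝓝[≠] ω) (𝓝[≠] (jw ω)) := by
  refine tendsto_nhdsWithin_iff.2 ⟨(jw_continuous.continuousAt.tendsto).mono_left
    nhdsWithin_le_nhds, ?_⟩
  filter_upwards [self_mem_nhdsWithin] with a ha h using ha (jw_injective h)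

theorem tendsto_jw_atTop : Tendsto jw atTop (Bornology.cobounded ℂ) := by
  rw [← tendsto_norm_atTop_iff_cobounded]
  have : (fun x => ‖jw x‖) = fun x : ℝ => |x| := by ext x; simp [jw]
  rw [this]; exact tendsto_abs_atTop_atTop

theorem tendsto_jw_atBot : Tendsto jw atBot (Bornology.cobounded ℂ) := by
  rw [← tendsto_norm_atTop_iff_cobounded]
  have : (fun x => ‖jw x‖) = fun x : ℝ => |x| := by ext x; simp [jw]
  rw [this]; exact tendsto_abs_atBot_atTop

theorem eventually_not_mem_finite {S : Set ℝ} (h : S.Finite) (ω : ℝ) :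
    ∀ᶠ w in 𝓝[≠] ω, w ∉ S := by
  have := (h.subset (Set.sdiff_subset (t := {ω}))).isClosed.isOpen_compl.mem_nhds
    (show ω ∈ (S \ {ω})ᶜ by simp)
  filter_upwards [mem_nhdsWithin_of_mem_nhds this, self_mem_nhdsWithin] with w hw hw2 hw3
  exact hw ⟨hw3, hw2⟩

/-- A meromorphic function that is frequently bounded near `a` extends analytically. -/
theorem mero_ext {f : ℂ → ℂ} {a : ℂ} (hf : MeromorphicAt f a) {B : ℝ}
    (hb : ∃ᶠ s in 𝓝[≠] a, ‖f s‖ ≤ B) :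
    ∃ h : ℂ → ℂ, AnalyticAt ℂ h a ∧ f =ᶠ[𝓝[≠] a] h := by
  have ho : 0 ≤ meromorphicOrderAt f a := by
    by_contra hc
    have := tendsto_cobounded_of_meromorphicOrderAt_neg (not_le.1 hc)
    have h2 := (tendsto_norm_atTop_iff_cobounded.2 this).eventually (eventually_gt_atTop B)
    obtain ⟨s, h1, h3⟩ := (hb.and_eventually h2).exists
    linarith
  refine ⟨toMeromorphicNFAt f a, ?_, hf.eq_nhdsNE_toMeromorphicNFAt⟩
  have hN := meromorphicNFAt_toMeromorphicNFAt (f := f) (x := a)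
  rw [← hN.meromorphicOrderAt_nonneg_iff_analyticAt]
  rwa [meromorphicOrderAt_congr hf.eq_nhdsNE_toMeromorphicNFAt.symm]

theorem mero_tendsto {f : ℂ → ℂ} {a : ℂ} (hf : MeromorphicAt f a) {B : ℝ}
    (hb : ∃ᶠ s in 𝓝[≠] a, ‖f s‖ ≤ B) : ∃ l, Tendsto f (𝓝[≠] a) (𝓝 l) := by
  obtain ⟨h, ha, he⟩ := mero_ext hf hb
  exact ⟨h a, (ha.continuousAt.tendsto.mono_left nhdsWithin_le_nhds).congr' he.symm⟩

theorem mero_slope {f : ℂ → ℂ} {a c : ℂ} (hf : MeromorphicAt f a)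
    (hc : Tendsto f (𝓝[≠] a) (𝓝 c)) :
    ∃ d, Tendsto (fun s => (f s - c) / (s - a)) (𝓝[≠] a) (𝓝 d) := by
  have hb : ∃ᶠ s in 𝓝[≠] a, ‖f s‖ ≤ ‖c‖ + 1 :=
    (hc.norm.eventually (ge_mem_nhds (by linarith))).frequently
  obtain ⟨h, ha, he⟩ := mero_ext hf hb
  have hac : h a = c := tendsto_nhds_unique
    ((ha.continuousAt.tendsto.mono_left nhdsWithin_le_nhds).congr' he.symm) hc
  refine ⟨deriv h a, ?_⟩
  have := hasDerivAt_iff_tendsto_slope.1 ha.differentiableAt.hasDerivAt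
  refine this.congr' ?_
  filter_upwards [he] with s hs
  rw [hs, slope_def_field, hac]

theorem mero_pole {f : ℂ → ℂ} {a r : ℂ} (hf : MeromorphicAt f a)
    (hc : Tendsto (fun s => (s - a) * f s) (𝓝[≠] a) (𝓝 r)) :
    ∃ d, Tendsto (fun s => f s - r / (s - a)) (𝓝[≠] a) (𝓝 d) := by
  have hm : MeromorphicAt (fun s => (s - a) * f s) a := by fun_prop
  obtain ⟨d, hd⟩ := mero_slope hm hc
  refine ⟨d, hd.congr' ?_⟩
  filter_upwards [self_mem_nhdsWithin] with s hs
  have : s - a ≠ 0 := sub_ne_zero.2 hs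
  field_simp

theorem mero_inf {f : ℂ → ℂ} (hf : MeromorphicAt (fun z => f z⁻¹) 0)
    (hc : Tendsto f (Bornology.cobounded ℂ) (𝓝 0)) :
    ∃ d, Tendsto (fun s => s * f s) (Bornology.cobounded ℂ) (𝓝 d) := by
  have h1 : Tendsto (fun z => f z⁻¹) (𝓝[≠] 0) (𝓝 0) := hc.comp tendsto_inv₀_nhdsNE_zero
  obtain ⟨d, hd⟩ := mero_slope hf h1
  refine ⟨d, (hd.comp tendsto_inv₀_cobounded').congr' ?_⟩
  filter_upwards with s
  simp [div_eq_mul_inv, mul_comm]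

theorem mero_inf_tendsto {f : ℂ → ℂ} (hf : MeromorphicAt (fun z => f z⁻¹) 0) {B : ℝ}
    (hb : ∃ᶠ s in Bornology.cobounded ℂ, ‖f s‖ ≤ B) :
    ∃ l, Tendsto f (Bornology.cobounded ℂ) (𝓝 l) := by
  have : ∃ᶠ z in 𝓝[≠] (0:ℂ), ‖f z⁻¹‖ ≤ B := by
    have h := tendsto_inv₀_cobounded'.frequently (p := fun z => ‖f z⁻¹‖ ≤ B) (α := ℂ)
      (by simpa using hb)
    exact h
  obtain ⟨l, hl⟩ := mero_tendsto hf this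
  refine ⟨l, (hl.comp tendsto_inv₀_cobounded').congr' ?_⟩
  filter_upwards with s
  simp

end part1

section part2

/-- Meromorphic on the Riemann sphere. -/
def Mero (f : ℂ → ℂ) : Prop :=
  (∀ a, MeromorphicAt f a) ∧ MeromorphicAt (fun z => f z⁻¹) 0

namespace Mero
theorem const (c : ℂ) : Mero (fun _ => c) := ⟨fun a => by fun_prop, by fun_prop⟩
theorem id : Mero (fun s => s) := ⟨fun a => by fun_prop, by fun_prop⟩
theorem add {f g : ℂ → ℂ} (hf : Mero f) (hg : Mero g) : Mero (fun s => f s + g s) :=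
  ⟨fun a => (hf.1 a).fun_add (hg.1 a), hf.2.fun_add hg.2⟩
theorem sub {f g : ℂ → ℂ} (hf : Mero f) (hg : Mero g) : Mero (fun s => f s - g s) :=
  ⟨fun a => (hf.1 a).fun_sub (hg.1 a), hf.2.fun_sub hg.2⟩
theorem mul {f g : ℂ → ℂ} (hf : Mero f) (hg : Mero g) : Mero (fun s => f s * g s) :=
  ⟨fun a => (hf.1 a).fun_mul (hg.1 a), hf.2.fun_mul hg.2⟩
theorem inv {f : ℂ → ℂ} (hf : Mero f) : Mero (fun s => (f s)⁻¹) :=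
  ⟨fun a => (hf.1 a).fun_inv, hf.2.fun_inv⟩
theorem div {f g : ℂ → ℂ} (hf : Mero f) (hg : Mero g) : Mero (fun s => f s / g s) := by
  simpa only [div_eq_mul_inv] using hf.mul hg.inv
theorem pow {f : ℂ → ℂ} (hf : Mero f) (k : ℕ) : Mero (fun s => (f s) ^ k) :=
  ⟨fun a => (hf.1 a).fun_pow k, hf.2.fun_pow k⟩
theorem sum {ι : Type*} (t : Finset ι) {f : ι → ℂ → ℂ} (hf : ∀ i ∈ t, Mero (f i)) :
    Mero (fun s => ∑ i ∈ t, f i s) :=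
  ⟨fun a => by classical exact MeromorphicAt.fun_sum (fun i hi => (hf i hi).1 a),
   by classical exact MeromorphicAt.fun_sum (G := fun i z => f i z⁻¹) (fun i hi => (hf i hi).2)⟩
theorem prod {ι : Type*} (t : Finset ι) {f : ι → ℂ → ℂ} (hf : ∀ i ∈ t, Mero (f i)) :
    Mero (fun s => ∏ i ∈ t, f i s) :=
  ⟨fun a => by classical exact MeromorphicAt.fun_prod (fun i hi => (hf i hi).1 a),
   by classical exact MeromorphicAt.fun_prod (F := fun i z => f i z⁻¹) (fun i hi => (hf i hi).2)⟩
theorem ite {f g : ℂ → ℂ} (p : Prop) [Decidable p] (hf : Mero f) (hg : Mero g) :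
    Mero (fun s => if p then f s else g s) := by
  by_cases h : p <;> simpa [h]
end Mero

variable {m : Type*} [Fintype m] [DecidableEq m]

/-- Entrywise meromorphic matrix function. -/
def MM (F : ℂ → Matrix m m ℂ) : Prop := ∀ i j, Mero (fun s => F s i j)

namespace MM
variable {F G : ℂ → Matrix m m ℂ}
theorem const (A : Matrix m m ℂ) : MM (fun _ => A) := fun i j => Mero.const _
theorem add (hF : MM F) (hG : MM G) : MM (fun s => F s + G s) := fun i j => (hF i j).add (hG i j)
theorem sub (hF : MM F) (hG : MM G) : MM (fun s => F s - G s) := fun i j => (hF i j).sub (hG i j)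
theorem mul (hF : MM F) (hG : MM G) : MM (fun s => F s * G s) := fun i j => by
  simp only [Matrix.mul_apply]
  exact Mero.sum _ fun k _ => (hF i k).mul (hG k j)
theorem smul {f : ℂ → ℂ} (hf : Mero f) (hG : MM G) : MM (fun s => f s • G s) := fun i j => by
  simp only [Matrix.smul_apply, smul_eq_mul]
  exact hf.mul (hG i j)
theorem det (hF : MM F) : Mero (fun s => (F s).det) := by
  simp only [Matrix.det_apply']
  exact Mero.sum _ fun σ _ => (Mero.const _).mul (Mero.prod _ fun i _ => hF _ _)
theorem inv (hF : MM F) : MM (fun s => (F s)⁻¹) := fun i j => by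
  simp only [Matrix.inv_def, Ring.inverse_eq_inv', Matrix.smul_apply, smul_eq_mul, Matrix.adjugate_apply]
  refine (det hF).inv.mul (det fun a b => ?_)
  simp only [Matrix.updateRow_apply]
  exact Mero.ite _ (Mero.const _) (hF a b)
end MM

theorem diffAt_det {F : ℂ → Matrix m m ℂ} {s : ℂ}
    (hF : ∀ i j, DifferentiableAt ℂ (fun s => F s i j) s) :
    DifferentiableAt ℂ (fun s => (F s).det) s := by
  simp only [Matrix.det_apply']
  refine DifferentiableAt.fun_sum fun σ _ => ?_
  refine (differentiableAt_const _).mul ?_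
  have := fun i => hF (σ i) i
  exact DifferentiableAt.fun_finsetProd fun i _ => this i

theorem diffAt_inv {F : ℂ → Matrix m m ℂ} {s : ℂ}
    (hF : ∀ i j, DifferentiableAt ℂ (fun s => F s i j) s) (h0 : (F s).det ≠ 0) (i j : m) :
    DifferentiableAt ℂ (fun s => (F s)⁻¹ i j) s := by
  simp only [Matrix.inv_def, Ring.inverse_eq_inv', Matrix.smul_apply, smul_eq_mul, Matrix.adjugate_apply]
  refine ((diffAt_det hF).inv h0).mul (diffAt_det fun a b => ?_)
  simp only [Matrix.updateRow_apply]
  by_cases h : a = j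
  · simp [h]
  · simpa [h] using hF a b

theorem diffAt_mul {F G : ℂ → Matrix m m ℂ} {s : ℂ}
    (hF : ∀ i j, DifferentiableAt ℂ (fun s => F s i j) s)
    (hG : ∀ i j, DifferentiableAt ℂ (fun s => G s i j) s) (i j : m) :
    DifferentiableAt ℂ (fun s => (F s * G s) i j) s := by
  simp only [Matrix.mul_apply]
  exact DifferentiableAt.fun_sum fun k _ => (hF i k).mul (hG k j)

theorem tendsto_matInv {α : Type*} {l : Filter α} {F : α → Matrix m m ℂ} {A : Matrix m m ℂ}
    (hF : Tendsto F l (𝓝 A)) (h0 : A.det ≠ 0) : Tendsto (fun s => (F s)⁻¹) l (𝓝 A⁻¹) := by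
  simp only [Matrix.inv_def, Ring.inverse_eq_inv']
  have h1 : Tendsto (fun s => (F s).det) l (𝓝 A.det) :=
    ((Continuous.matrix_det continuous_id).tendsto A).comp hF
  have h2 : Tendsto (fun s => (F s).adjugate) l (𝓝 A.adjugate) :=
    ((Continuous.matrix_adjugate continuous_id).tendsto A).comp hF
  exact (h1.inv₀ h0).smul h2

theorem tendsto_mat {α : Type*} {l : Filter α} {F : α → Matrix m m ℂ} {A : Matrix m m ℂ} :
    Tendsto F l (𝓝 A) ↔ ∀ i j, Tendsto (fun s => F s i j) l (𝓝 (A i j)) := by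
  constructor
  · intro h i j
    exact tendsto_pi_nhds.1 (tendsto_pi_nhds.1 h i) j
  · intro h
    exact tendsto_pi_nhds.2 fun i => tendsto_pi_nhds.2 fun j => h i j

theorem tendsto_mat_of_ex {α : Type*} {l : Filter α} {F : α → Matrix m m ℂ}
    (h : ∀ i j, ∃ a, Tendsto (fun s => F s i j) l (𝓝 a)) : ∃ A, Tendsto F l (𝓝 A) := by
  choose A hA using h
  exact ⟨Matrix.of A, tendsto_mat.2 hA⟩

/-! rational functions -/

theorem evalC_def (f : RatFunc ℝ) (s : ℂ) : evalC f s =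
    f.num.eval₂ (algebraMap ℝ ℂ) s / f.denom.eval₂ (algebraMap ℝ ℂ) s := rfl

theorem mero_poly (p : ℝ[X]) : Mero (fun s => p.eval₂ (algebraMap ℝ ℂ) s) := by
  simp only [Polynomial.eval₂_eq_sum_range]
  exact Mero.sum _ fun i _ => (Mero.const _).mul (Mero.id.pow i)

theorem mero_evalC (f : RatFunc ℝ) : Mero (evalC f) :=
  (mero_poly f.num).div (mero_poly f.denom)

theorem mm_evalM (G : Matrix (Fin n) (Fin n) (RatFunc ℝ)) : MM (evalM G) :=
  fun i j => mero_evalC (G i j)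

theorem diff_poly (p : ℝ[X]) : Differentiable ℂ (fun s => p.eval₂ (algebraMap ℝ ℂ) s) := by
  simp only [Polynomial.eval₂_eq_sum_range]
  fun_prop

theorem diffAt_evalC {f : RatFunc ℝ} {s : ℂ} (h : ¬ IsPoleAt f s) :
    DifferentiableAt ℂ (evalC f) s :=
  (diff_poly f.num s).div (diff_poly f.denom s) h

theorem finite_poly {p : ℝ[X]} (hp : p ≠ 0) : {s : ℂ | p.eval₂ (algebraMap ℝ ℂ) s = 0}.Finite := by
  have h : p.map (algebraMap ℝ ℂ) ≠ 0 := by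
    rwa [Ne, Polynomial.map_eq_zero]
  have := Polynomial.finite_setOfPred_isRoot h
  simpa [Polynomial.IsRoot, Polynomial.eval_map] using this

theorem finite_poles (f : RatFunc ℝ) : {s : ℂ | IsPoleAt f s}.Finite :=
  finite_poly f.denom_ne_zero

theorem finite_hasPole (G : Matrix (Fin n) (Fin n) (RatFunc ℝ)) : {s : ℂ | HasPole G s}.Finite := by
  have : {s : ℂ | HasPole G s} = ⋃ i, ⋃ j, {s : ℂ | IsPoleAt (G i j) s} := by
    ext s; simp [HasPole]
  rw [this]
  exact Set.finite_iUnion fun i => Set.finite_iUnion fun j => finite_poles _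

theorem num_ne_zero_of_pole {f : RatFunc ℝ} {s : ℂ} (h : IsPoleAt f s) :
    f.num.eval₂ (algebraMap ℝ ℂ) s ≠ 0 := by
  intro h0
  obtain ⟨a, b, hab⟩ := f.isCoprime_num_denom
  have := congrArg (Polynomial.eval₂ (algebraMap ℝ ℂ) s) hab
  unfold IsPoleAt at h
  simp [Polynomial.eval₂_add, Polynomial.eval₂_mul, h0, h] at this

theorem not_pole_of_frequently {f : RatFunc ℝ} {a : ℂ} {B : ℝ}
    (hb : ∃ᶠ s in 𝓝[≠] a, ‖evalC f s‖ ≤ B) : ¬ IsPoleAt f a := by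
  intro hp
  obtain ⟨l, hl⟩ := mero_tendsto ((mero_evalC f).1 a) hb
  have hd : Tendsto (fun s => f.denom.eval₂ (algebraMap ℝ ℂ) s) (𝓝[≠] a) (𝓝 0) := by
    have := ((diff_poly f.denom).continuous.tendsto a).mono_left (nhdsWithin_le_nhds (s := {a}ᶜ))
    rwa [show f.denom.eval₂ (algebraMap ℝ ℂ) a = 0 from hp] at this
  have hn := ((diff_poly f.num).continuous.tendsto a).mono_left (nhdsWithin_le_nhds (s := {a}ᶜ))
  have h2 := hl.mul hd
  rw [mul_zero] at h2
  have hev : ∀ᶠ s in 𝓝[≠] a, f.denom.eval₂ (algebraMap ℝ ℂ) s ≠ 0 := by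
    have := ((finite_poles f).subset (Set.sdiff_subset (t := {a}))).isClosed.isOpen_compl.mem_nhds
      (show a ∈ ({s : ℂ | IsPoleAt f s} \ {a})ᶜ by simp)
    filter_upwards [mem_nhdsWithin_of_mem_nhds this, self_mem_nhdsWithin] with w hw hw2 hw3
    exact hw ⟨hw3, hw2⟩
  have h3 : Tendsto (fun s => f.num.eval₂ (algebraMap ℝ ℂ) s) (𝓝[≠] a) (𝓝 0) := by
    refine h2.congr' ?_
    filter_upwards [hev] with s hs
    rw [evalC_def, div_mul_cancel₀ _ hs]
  exact num_ne_zero_of_pole hp (tendsto_nhds_unique hn h3)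

theorem evalC_ofReal (f : RatFunc ℝ) (x : ℝ) :
    evalC f (x : ℂ) = ((f.num.eval x / f.denom.eval x : ℝ) : ℂ) := by
  rw [evalC_def]
  have h : ∀ p : ℝ[X], p.eval₂ (algebraMap ℝ ℂ) (x : ℂ) = ((p.eval x : ℝ) : ℂ) := by
    intro p
    have := Polynomial.eval₂_at_apply (p := p) (algebraMap ℝ ℂ) x
    simpa using this
  rw [h, h]; push_cast; rfl

theorem tendsto_ofReal_cobounded : Tendsto (fun x : ℝ => (x : ℂ)) atTop (Bornology.cobounded ℂ) := by
  rw [← tendsto_norm_atTop_iff_cobounded]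
  simpa using tendsto_abs_atTop_atTop

theorem proper_of_frequently {f : RatFunc ℝ} {B : ℝ}
    (hb : ∃ᶠ s in Bornology.cobounded ℂ, ‖evalC f s‖ ≤ B) : f.num.degree ≤ f.denom.degree := by
  obtain ⟨l, hl⟩ := mero_inf_tendsto (mero_evalC f).2 hb
  by_contra hc
  have h1 := (hl.comp tendsto_ofReal_cobounded).norm
  have h2 := Polynomial.abs_div_tendsto_atTop_atTop_of_degree_gt f.num f.denom (not_le.1 hc) f.denom_ne_zero
  refine not_tendsto_nhds_of_tendsto_atTop h2 ‖l‖ ?_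
  refine h1.congr fun x => ?_
  simp only [Function.comp, evalC_ofReal, Complex.norm_real, Real.norm_eq_abs]

theorem tendsto_atInfinity {f : RatFunc ℝ} (hf : f.num.degree ≤ f.denom.degree) :
    Tendsto (evalC f) (Bornology.cobounded ℂ) (𝓝 (atInfinity f)) := by
  have h1 : Tendsto (fun x : ℝ => f.num.eval x / f.denom.eval x) atTop (𝓝 (atInfinity f)) := by
    unfold atInfinity
    split_ifs with h
    · exact Polynomial.div_tendsto_atTop_leadingCoeff_div_of_degree_eq _ _ h
    · exact Polynomial.div_tendsto_atTop_zero_of_degree_lt _ _ (lt_of_le_of_ne hf h)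
  have h2 : Tendsto (fun x : ℝ => evalC f (x:ℂ)) atTop (𝓝 (atInfinity f : ℂ)) := by
    simp only [evalC_ofReal]
    exact (Complex.continuous_ofReal.tendsto _).comp h1
  have h3 : ∃ᶠ s in Bornology.cobounded ℂ, ‖evalC f s‖ ≤ ‖(atInfinity f : ℂ)‖ + 1 := by
    refine tendsto_ofReal_cobounded.frequently ?_
    exact (h2.norm.eventually (ge_mem_nhds (by linarith))).frequently
  obtain ⟨l, hl⟩ := mero_inf_tendsto (mero_evalC f).2 h3
  have := tendsto_nhds_unique (hl.comp tendsto_ofReal_cobounded) h2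
  rwa [this] at hl

theorem evalC_conj (f : RatFunc ℝ) (s : ℂ) : evalC f (star s) = star (evalC f s) := by
  have h : ∀ p : ℝ[X], p.eval₂ (algebraMap ℝ ℂ) (star s) = star (p.eval₂ (algebraMap ℝ ℂ) s) := by
    intro p
    simp only [Polynomial.eval₂_eq_sum_range]
    simp
  rw [evalC_def, evalC_def, h, h]
  simp

theorem evalR_zero (G : Matrix (Fin n) (Fin n) (RatFunc ℝ)) :
    (evalR G 0).map Complex.ofReal = evalM G 0 := by
  ext i j
  have := evalC_ofReal (G i j) 0
  simp only [Complex.ofReal_zero] at this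
  simp only [evalM, evalR, Matrix.map_apply, Matrix.of_apply, this]
  rfl

theorem evalC_add {f g : RatFunc ℝ} {s : ℂ} (hf : ¬ IsPoleAt f s) (hg : ¬ IsPoleAt g s) :
    evalC (f + g) s = evalC f s + evalC g s := RatFunc.eval_add _ _ hf hg

theorem evalC_mul {f g : RatFunc ℝ} {s : ℂ} (hf : ¬ IsPoleAt f s) (hg : ¬ IsPoleAt g s) :
    evalC (f * g) s = evalC f s * evalC g s := RatFunc.eval_mul _ _ hf hg

theorem not_pole_add {f g : RatFunc ℝ} {s : ℂ} (hf : ¬ IsPoleAt f s) (hg : ¬ IsPoleAt g s) :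
    ¬ IsPoleAt (f + g) s := by
  intro h
  have := Polynomial.eval₂_eq_zero_of_dvd_of_eval₂_eq_zero _ s (RatFunc.denom_add_dvd f g) h
  rw [Polynomial.eval₂_mul] at this
  exact (mul_ne_zero hf hg) this

theorem not_pole_mul {f g : RatFunc ℝ} {s : ℂ} (hf : ¬ IsPoleAt f s) (hg : ¬ IsPoleAt g s) :
    ¬ IsPoleAt (f * g) s := by
  intro h
  have := Polynomial.eval₂_eq_zero_of_dvd_of_eval₂_eq_zero _ s (RatFunc.denom_mul_dvd f g) h
  rw [Polynomial.eval₂_mul] at this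
  exact (mul_ne_zero hf hg) this

theorem not_pole_zero (s : ℂ) : ¬ IsPoleAt 0 s := by simp [IsPoleAt]
theorem not_pole_one (s : ℂ) : ¬ IsPoleAt 1 s := by simp [IsPoleAt]

theorem evalC_sum {ι : Type*} (t : Finset ι) (f : ι → RatFunc ℝ) {s : ℂ}
    (hf : ∀ i, ¬ IsPoleAt (f i) s) :
    evalC (∑ i ∈ t, f i) s = ∑ i ∈ t, evalC (f i) s ∧ ¬ IsPoleAt (∑ i ∈ t, f i) s := by
  classical
  induction t using Finset.induction_on with
  | empty => simp [not_pole_zero, evalC]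
  | insert a t ha ih =>
    rw [Finset.sum_insert ha, Finset.sum_insert ha, evalC_add (hf a) ih.2, ih.1]
    exact ⟨rfl, not_pole_add (hf a) ih.2⟩

theorem evalM_mul {A B : Matrix (Fin n) (Fin n) (RatFunc ℝ)} {s : ℂ} (hA : ¬ HasPole A s)
    (hB : ¬ HasPole B s) : evalM (A * B) s = evalM A s * evalM B s ∧ ¬ HasPole (A * B) s := by
  simp only [HasPole, not_exists] at hA hB ⊢
  constructor
  · ext i j
    simp only [evalM, Matrix.of_apply, Matrix.mul_apply]
    rw [(evalC_sum _ _ fun k => not_pole_mul (hA i k) (hB k j)).1]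
    exact Finset.sum_congr rfl fun k _ => evalC_mul (hA i k) (hB k j)
  · intro i j
    simp only [Matrix.mul_apply]
    exact (evalC_sum _ _ fun k => not_pole_mul (hA i k) (hB k j)).2

theorem evalM_one (s : ℂ) : evalM (1 : Matrix (Fin n) (Fin n) (RatFunc ℝ)) s = 1 := by
  ext i j
  simp only [evalM, Matrix.of_apply, Matrix.one_apply]
  split_ifs <;> simp [evalC]

theorem evalM_add {A B : Matrix (Fin n) (Fin n) (RatFunc ℝ)} {s : ℂ} (hA : ¬ HasPole A s)
    (hB : ¬ HasPole B s) : evalM (A + B) s = evalM A s + evalM B s := by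
  simp only [HasPole, not_exists] at hA hB
  ext i j
  exact evalC_add (hA i j) (hB i j)

end part2

section part3

variable {m : Type*} [Fintype m] [DecidableEq m]

/-- sesquilinear form of a matrix -/
def q (A : Matrix m m ℂ) (w v : m → ℂ) : ℂ := star w ⬝ᵥ (A *ᵥ v)

theorem q_add_left (A : Matrix m m ℂ) (w w' v : m → ℂ) : q A (w + w') v = q A w v + q A w' v := by
  simp [q, star_add, add_dotProduct]
theorem q_sub_left (A : Matrix m m ℂ) (w w' v : m → ℂ) : q A (w - w') v = q A w v - q A w' v := by
  simp [q, star_sub, sub_dotProduct]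
theorem q_add_right (A : Matrix m m ℂ) (w v v' : m → ℂ) : q A w (v + v') = q A w v + q A w v' := by
  simp [q, Matrix.mulVec_add, dotProduct_add]
theorem q_sub_right (A : Matrix m m ℂ) (w v v' : m → ℂ) : q A w (v - v') = q A w v - q A w v' := by
  simp [q, Matrix.mulVec_sub, dotProduct_sub]
theorem q_smul_left (A : Matrix m m ℂ) (c : ℂ) (w v : m → ℂ) : q A (c • w) v = star c * q A w v := by
  simp [q, star_smul, smul_dotProduct]
theorem q_smul_right (A : Matrix m m ℂ) (c : ℂ) (w v : m → ℂ) : q A w (c • v) = c * q A w v := by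
  simp [q, Matrix.mulVec_smul, dotProduct_smul]
theorem q_mat_add (A B : Matrix m m ℂ) (w v : m → ℂ) : q (A + B) w v = q A w v + q B w v := by
  simp [q, Matrix.add_mulVec, dotProduct_add]
theorem q_mat_sub (A B : Matrix m m ℂ) (w v : m → ℂ) : q (A - B) w v = q A w v - q B w v := by
  simp [q, Matrix.sub_mulVec, dotProduct_sub]
theorem q_mat_smul (c : ℂ) (A : Matrix m m ℂ) (w v : m → ℂ) : q (c • A) w v = c * q A w v := by
  simp [q, Matrix.smul_mulVec, dotProduct_smul]
theorem q_zero_left (A : Matrix m m ℂ) (v : m → ℂ) : q A 0 v = 0 := by simp [q]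
theorem q_zero_right (A : Matrix m m ℂ) (v : m → ℂ) : q A v 0 = 0 := by simp [q]
theorem q_mat_zero (w v : m → ℂ) : q 0 w v = 0 := by simp [q]

theorem q_sum (A : Matrix m m ℂ) (w v : m → ℂ) :
    q A w v = ∑ i, star (w i) * ∑ j, A i j * v j := by
  simp [q, dotProduct, Matrix.mulVec]

theorem mero_q {F : ℂ → Matrix m m ℂ} (hF : MM F) (w v : m → ℂ) : Mero (fun s => q (F s) w v) := by
  simp only [q_sum]
  exact Mero.sum _ fun i _ => (Mero.const _).mul (Mero.sum _ fun j _ => (hF i j).mul (Mero.const _))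

theorem diffAt_q {F : ℂ → Matrix m m ℂ} {s : ℂ}
    (hF : ∀ i j, DifferentiableAt ℂ (fun s => F s i j) s) (w v : m → ℂ) :
    DifferentiableAt ℂ (fun s => q (F s) w v) s := by
  simp only [q_sum]
  exact DifferentiableAt.fun_sum fun i _ => (differentiableAt_const _).mul
    (DifferentiableAt.fun_sum fun j _ => (hF i j).mul (differentiableAt_const _))

theorem tendsto_q {α : Type*} {l : Filter α} {F : α → Matrix m m ℂ} {A : Matrix m m ℂ}
    (hF : Tendsto F l (𝓝 A)) (w v : m → ℂ) : Tendsto (fun s => q (F s) w v) l (𝓝 (q A w v)) := by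
  simp only [q_sum]
  exact tendsto_finsetSum _ fun i _ => tendsto_const_nhds.mul
    (tendsto_finsetSum _ fun j _ => (tendsto_mat.1 hF i j).mul tendsto_const_nhds)

/-- strictly proper negative imaginary matrix function -/
structure NIF (M : ℂ → Matrix m m ℂ) : Prop where
  mm : MM M
  diff : ∀ s : ℂ, 0 < s.re → ∀ i j, DifferentiableAt ℂ (fun s => M s i j) s
  ax : ∀ ω : ℝ, ∃ R : Matrix m m ℂ, (∀ w, 0 ≤ q R w w) ∧
    Tendsto (fun s => ((s - jw ω) * s) • M s) (𝓝[≠] (jw ω)) (𝓝 R)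
  inf : Tendsto M (Bornology.cobounded ℂ) (𝓝 0)
  ni : ∃ S : Set ℝ, S.Finite ∧ ∀ ω, ω ∉ S → ∀ w, ω * (q (M (jw ω)) w w).im ≤ 0

theorem jw_re (ω : ℝ) : (jw ω).re = 0 := by simp [jw]
theorem jw_im (ω : ℝ) : (jw ω).im = ω := by simp [jw]
theorem jw_zero : jw 0 = 0 := by simp [jw]
theorem star_jw (ω : ℝ) : star (jw ω) = - jw ω := by simp [jw]
theorem jw_ne_zero {ω : ℝ} (h : ω ≠ 0) : jw ω ≠ 0 := by simp [jw, h]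
theorem ne_zero_of_re {s : ℂ} (h : 0 < s.re) : s ≠ 0 := by rintro rfl; simp at h

theorem NIF.pr {M : ℂ → Matrix m m ℂ} (h : NIF M) (s : ℂ) (hs : 0 < s.re) (w : m → ℂ) :
    0 ≤ (s * q (M s) w w).re := by
  refine re_nonneg_of_boundary (fun s => s * q (M s) w w) ?_ ?_ ?_ ?_ s hs
  · intro z hz
    exact (differentiableAt_id.mul (diffAt_q (h.diff z hz) w w)).differentiableWithinAt
  · obtain ⟨S, hS, hni⟩ := h.ni
    refine hS.subset ?_
    intro ω hω
    by_contra hc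
    have := hni ω hc w
    simp only [Set.mem_ofPred_eq, Complex.mul_re, jw_re, jw_im] at hω
    linarith
  · intro ω
    obtain ⟨R, hR, hT⟩ := h.ax ω
    have h1 := tendsto_q hT w w
    simp only [q_mat_smul] at h1
    have h2 : Tendsto (fun s => (s - jw ω) * (s * q (M s) w w)) (𝓝[≠] (jw ω)) (𝓝 (q R w w)) := by
      refine h1.congr fun s => by ring
    obtain ⟨d, hd⟩ := mero_pole ((Mero.id.mul (mero_q h.mm w w)).1 _) h2
    have h3 := Complex.nonneg_iff.1 (hR w)
    refine ⟨(q R w w).re, d, h3.1, ?_⟩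
    have : (((q R w w).re : ℝ) : ℂ) = q R w w := Complex.ext rfl (by simp [← h3.2])
    rw [this]; exact hd
  · have := tendsto_q h.inf w w
    rw [q_mat_zero] at this
    exact mero_inf (mero_q h.mm w w).2 this

theorem NIF.im_zero {M : ℂ → Matrix m m ℂ} (hni : ∃ S : Set ℝ, S.Finite ∧ ∀ ω, ω ∉ S → ∀ w, ω * (q (M (jw ω)) w w).im ≤ 0) {M0 : Matrix m m ℂ}
    (h0 : Tendsto M (𝓝[≠] 0) (𝓝 M0)) (v : m → ℂ) : (q M0 v v).im = 0 := by
  obtain ⟨S, hS, hni⟩ := hni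
  have hT : Tendsto (fun ω : ℝ => (q (M (jw ω)) v v).im) (𝓝[≠] 0) (𝓝 (q M0 v v).im) := by
    have := tendsto_jw 0
    rw [jw_zero] at this
    exact (Complex.continuous_im.tendsto _).comp ((tendsto_q h0 v v).comp this)
  have hev := eventually_not_mem_finite hS 0
  apply le_antisymm
  · have h1 : 𝓝[>] (0:ℝ) ≤ 𝓝[≠] 0 := nhdsWithin_mono _ fun x hx => ne_of_gt hx
    refine le_of_tendsto (hT.mono_left h1) ?_
    filter_upwards [h1 hev, self_mem_nhdsWithin] with ω h2 h3
    have := hni ω h2 v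
    have h3 : 0 < ω := h3
    exact nonpos_of_mul_nonpos_right this h3
  · have h1 : 𝓝[<] (0:ℝ) ≤ 𝓝[≠] 0 := nhdsWithin_mono _ fun x hx => ne_of_lt hx
    refine ge_of_tendsto (hT.mono_left h1) ?_
    filter_upwards [h1 hev, self_mem_nhdsWithin] with ω h2 h3
    have := hni ω h2 v
    have h3 : ω < 0 := h3
    nlinarith

theorem im_zero_inf {M : ℂ → Matrix m m ℂ} (hni : ∃ S : Set ℝ, S.Finite ∧ ∀ ω, ω ∉ S → ∀ w, ω * (q (M (jw ω)) w w).im ≤ 0) {M0 : Matrix m m ℂ}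
    (h0 : Tendsto M (Bornology.cobounded ℂ) (𝓝 M0)) (v : m → ℂ) : (q M0 v v).im = 0 := by
  obtain ⟨S, hS, hni⟩ := hni
  have hT := (Complex.continuous_im.tendsto _).comp ((tendsto_q h0 v v).comp tendsto_jw_atTop)
  have hB := (Complex.continuous_im.tendsto _).comp ((tendsto_q h0 v v).comp tendsto_jw_atBot)
  apply le_antisymm
  · refine le_of_tendsto hT ?_
    obtain ⟨B, hB⟩ := hS.bddAbove
    filter_upwards [eventually_gt_atTop B, eventually_gt_atTop 0] with ω h2 h3
    have := hni ω (fun h => absurd (hB h) (not_le.2 h2)) v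
    exact nonpos_of_mul_nonpos_right this h3
  · refine ge_of_tendsto hB ?_
    obtain ⟨B, hB⟩ := hS.bddBelow
    filter_upwards [eventually_lt_atBot B, eventually_lt_atBot 0] with ω h2 h3
    have := hni ω (fun h => absurd (hB h) (not_le.2 h2)) v
    simp only [Function.comp]
    nlinarith

theorem NIF.pick {M : ℂ → Matrix m m ℂ} (h : NIF M) {M0 : Matrix m m ℂ}
    (h0 : Tendsto M (𝓝[≠] 0) (𝓝 M0)) (s0 : ℂ) (hs0 : 0 < s0.re) (w v : m → ℂ) :
    0 ≤ (s0 * q (M s0) w w).re - 2 * s0.re * (q (M s0) v w).re + s0.re * (q M0 v v).re := by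
  have him := NIF.im_zero h.ni h0 v
  set q0 := q M0 v v with hq0
  let f2 : ℂ → ℂ := fun s => s * q (M s) w w - (s - s0) * q (M s) w v - (s + star s0) * q (M s) v w
    + (s - s0) * (s + star s0) / s * q (M s) v v + s0 * star s0 / s * q0
  have hbb : ∀ s : ℂ, s ≠ 0 → f2 s = s * q (M s) w w - (s - s0) * q (M s) w v
    - (s + star s0) * q (M s) v w + (s + star s0 - s0) * q (M s) v v
    - s0 * star s0 * ((q (M s) v v - q0) / (s - 0)) := by
    intro s hs
    simp only [f2, sub_zero]
    field_simp
    ring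
  have key : 0 ≤ (f2 s0).re := by
    refine re_nonneg_of_boundary f2 ?_ ?_ ?_ ?_ s0 hs0
    · intro z hz
      have hz0 : z ≠ 0 := ne_zero_of_re hz
      have h1 := diffAt_q (h.diff z hz) w w
      have h2 := diffAt_q (h.diff z hz) w v
      have h3 := diffAt_q (h.diff z hz) v w
      have h4 := diffAt_q (h.diff z hz) v v
      apply DifferentiableAt.differentiableWithinAt
      simp only [f2]
      fun_prop (disch := assumption)
    · obtain ⟨S, hS, hni⟩ := h.ni
      refine (hS.union (Set.finite_singleton 0)).subset ?_
      intro ω hω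
      by_contra hc
      simp only [Set.mem_union, Set.mem_singleton_iff, not_or] at hc
      set a := w - ((jw ω - s0) / jw ω) • v with ha
      have := hni ω hc.1 a
      have hj := jw_ne_zero hc.2
      have e : f2 (jw ω) = jw ω * q (M (jw ω)) a a + s0 * star s0 / jw ω * q0 := by
        simp only [f2, ha, q_sub_left, q_sub_right, q_smul_left, q_smul_right, star_div₀, star_sub, star_jw]
        field_simp
        ring
      have e2 : (s0 * star s0 / jw ω * q0).re = 0 := by
        have : s0 * star s0 = ((Complex.normSq s0 : ℝ) : ℂ) := by
          simp [Complex.mul_conj]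
        rw [this]
        have : ((Complex.normSq s0 : ℝ) : ℂ) / jw ω = Complex.I * ((- Complex.normSq s0 / ω : ℝ):ℂ) := by
          have hw : (ω : ℂ) ≠ 0 := by exact_mod_cast hc.2
          simp only [jw]
          push_cast
          field_simp
          simp
        rw [this]
        simp [Complex.mul_re, him]
      have h5 : (f2 (jw ω)).re < 0 := hω
      rw [e] at h5
      simp only [Complex.add_re, e2, Complex.mul_re, jw_re, jw_im] at h5
      linarith
    · intro ω
      by_cases hω : ω = 0
      · subst hω
        refine ⟨0, ?_⟩
        simp only [jw_zero]
        obtain ⟨d, hd⟩ := mero_slope ((mero_q h.mm v v).1 0) (tendsto_q h0 v v)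
        have hid : Tendsto (fun s : ℂ => s) (𝓝[≠] 0) (𝓝 0) := nhdsWithin_le_nhds
        have hT := ((((hid.mul (tendsto_q h0 w w)).sub ((hid.sub_const s0).mul (tendsto_q h0 w v))).sub
          ((hid.add_const (star s0)).mul (tendsto_q h0 v w))).add
          (((hid.add_const (star s0)).sub_const s0).mul (tendsto_q h0 v v))).sub
          (hd.const_mul (s0 * star s0))
        refine ⟨_, le_refl _, hT.congr' ?_⟩
        filter_upwards [self_mem_nhdsWithin] with s hs
        rw [hbb s hs]; simp [hq0]
      · have hj := jw_ne_zero hω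
        obtain ⟨R, hR, hT⟩ := h.ax ω
        have hX : ∀ w v, Tendsto (fun s => ((s - jw ω) * s) * q (M s) w v) (𝓝[≠] (jw ω)) (𝓝 (q R w v)) := by
          intro w v
          have := tendsto_q hT w v
          simpa only [q_mat_smul] using this
        set a := w - ((jw ω - s0) / jw ω) • v with ha
        have hid : Tendsto (fun s : ℂ => s) (𝓝[≠] (jw ω)) (𝓝 (jw ω)) := nhdsWithin_le_nhds
        have hb := (hid.sub_const s0).div hid hj
        have hb' := (hid.add_const (star s0)).div hid hj
        have hlast := ((hid.sub_const (jw ω)).mul ((tendsto_const_nhds (x := s0 * star s0)).div hid hj)).mul_const q0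
        have hL := ((((hX w w).sub (hb.mul (hX w v))).sub (hb'.mul (hX v w))).add
          ((hb.mul hb').mul (hX v v))).add hlast
        have hr : q R w w - (jw ω - s0) / jw ω * q R w v - (jw ω + star s0) / jw ω * q R v w
            + (jw ω - s0) / jw ω * ((jw ω + star s0) / jw ω) * q R v v
            + (jw ω - jw ω) * (s0 * star s0 / jw ω) * q0 = q R a a := by
          simp only [ha, q_sub_left, q_sub_right, q_smul_left, q_smul_right, star_div₀, star_sub, star_jw]
          field_simp
          ring
        rw [hr] at hL
        have hL2 : Tendsto (fun s => (s - jw ω) * f2 s) (𝓝[≠] (jw ω)) (𝓝 (q R a a)) := by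
          refine hL.congr' ?_
          have : ∀ᶠ s in 𝓝[≠] (jw ω), s ≠ 0 := hid.eventually_ne hj
          filter_upwards [this] with s hs
          simp only [f2, Pi.div_apply]
          field_simp
        have hm : MeromorphicAt f2 (jw ω) := by
          have h1 := (mero_q h.mm w w).1 (jw ω)
          have h2 := (mero_q h.mm w v).1 (jw ω)
          have h3 := (mero_q h.mm v w).1 (jw ω)
          have h4 := (mero_q h.mm v v).1 (jw ω)
          simp only [f2]
          fun_prop
        obtain ⟨d, hd⟩ := mero_pole hm hL2
        have h3 := Complex.nonneg_iff.1 (hR a)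
        refine ⟨(q R a a).re, d, h3.1, ?_⟩
        have : (((q R a a).re : ℝ) : ℂ) = q R a a := Complex.ext rfl (by simp [← h3.2])
        rw [this]; exact hd
    · have hX : ∀ w v, Tendsto (fun s => q (M s) w v) (Bornology.cobounded ℂ) (𝓝 0) := by
        intro w v
        have := tendsto_q h.inf w v
        rwa [q_mat_zero] at this
      have hY := fun w v => mero_inf (mero_q h.mm w v).2 (hX w v)
      obtain ⟨d1, h1⟩ := hY w w
      obtain ⟨d2, h2⟩ := hY w v
      obtain ⟨d3, h3⟩ := hY v w
      obtain ⟨d4, h4⟩ := hY v v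
      have hi : Tendsto (fun s : ℂ => s⁻¹) (Bornology.cobounded ℂ) (𝓝 0) := tendsto_inv₀_cobounded
      have hL := (((h1.sub (h2.sub ((hX w v).const_mul s0))).sub
        (h3.add ((hX v w).const_mul (star s0)))).add
        ((h4.add ((hX v v).const_mul (star s0 - s0))).sub (((hi.mul (hX v v)).const_mul (s0 * star s0))))).add
        ((hi.const_mul (s0 * star s0)).mul_const q0)
      refine ⟨_, hL.congr' ?_⟩
      filter_upwards [Bornology.eventually_ne_cobounded (0:ℂ)] with s hs
      simp only [f2]
      field_simp
      ring
  have hfin : f2 s0 = s0 * q (M s0) w w - (s0 + star s0) * q (M s0) v w + star s0 * q0 := by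
    have := ne_zero_of_re hs0
    simp only [f2]
    field_simp
    ring
  rw [hfin] at key
  have e1 : s0 + star s0 = ((2 * s0.re : ℝ) : ℂ) := by
    apply Complex.ext <;> simp; ring
  rw [e1] at key
  simp only [Complex.add_re, Complex.sub_re, Complex.re_ofReal_mul, Complex.mul_re (star s0), him] at key
  simpa using key

end part3

section part4

variable {m : Type*} [Fintype m] [DecidableEq m]

theorem q_single (A : Matrix m m ℂ) (i j : m) : q A (Pi.single i 1) (Pi.single j 1) = A i j := by
  simp [q]

theorem herm_of_im {A : Matrix m m ℂ} (h : ∀ v, (q A v v).im = 0) : A.IsHermitian := by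
  have key : ∀ w v, q A w v = star (q A v w) := by
    intro w v
    have h1 := h (w + v)
    have h2 := h (w + Complex.I • v)
    simp only [q_add_left, q_add_right, q_smul_left, q_smul_right, Complex.add_im, Complex.mul_im,
      Complex.mul_re, Complex.star_def, Complex.conj_I, Complex.neg_re, Complex.neg_im, Complex.I_re,
      Complex.I_im, Complex.add_re, h w, h v] at h1 h2
    apply Complex.ext
    · simp; linarith
    · simp; linarith
  ext i j
  rw [Matrix.conjTranspose_apply, ← q_single A j i, ← key, q_single]

theorem q_herm {A : Matrix m m ℂ} (h : A.IsHermitian) (w v : m → ℂ) : q A w v = star (q A v w) := by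
  unfold q
  rw [← Matrix.star_dotProduct_star, star_star, Matrix.star_mulVec, h.eq, Matrix.dotProduct_mulVec,
    dotProduct_comm]

theorem q_herm_im {A : Matrix m m ℂ} (h : A.IsHermitian) (w : m → ℂ) : (q A w w).im = 0 := by
  have := congrArg Complex.im (q_herm h w w)
  simp at this; linarith

theorem q_herm_re {A : Matrix m m ℂ} (h : A.IsHermitian) (w v : m → ℂ) :
    (q A w v).re = (q A v w).re := by
  rw [q_herm h w v]; simp

theorem dot_mulVec_herm {A : Matrix m m ℂ} (h : A.IsHermitian) (w v : m → ℂ) :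
    star (A *ᵥ w) ⬝ᵥ v = q A w v := by
  rw [q, Matrix.star_mulVec, h.eq, Matrix.dotProduct_mulVec]

/-- psd -/
def Psd (E : Matrix m m ℂ) : Prop := E.IsHermitian ∧ ∀ w, 0 ≤ (q E w w).re

theorem psd_iff {E : Matrix m m ℂ} : Psd E ↔ E.PosSemidef := by
  rw [Matrix.posSemidef_iff_dotProduct_mulVec]
  refine and_congr_right fun h => forall_congr' fun w => ?_
  change _ ↔ 0 ≤ q E w w
  rw [Complex.nonneg_iff, q_herm_im h]; simp

theorem psd_nonneg {E : Matrix m m ℂ} (h : Psd E) (w : m → ℂ) : 0 ≤ q E w w := by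
  rw [Complex.nonneg_iff]; exact ⟨h.2 w, (q_herm_im h.1 w).symm⟩

theorem psd_ker {E : Matrix m m ℂ} (h : Psd E) {w : m → ℂ} (h0 : (q E w w).re = 0) : E *ᵥ w = 0 := by
  rw [← (psd_iff.1 h).dotProduct_mulVec_zero_iff]
  exact Complex.ext h0 (q_herm_im h.1 w)

/-- the key strict inequality -/
def StarP (B E : Matrix m m ℂ) : Prop :=
  ∀ v w, E *ᵥ v = B *ᵥ w → w ≠ 0 → (q B w w).re < (q E v v).re

theorem mulVec_inj_of_det {A : Matrix m m ℂ} (h : A.det ≠ 0) {v w : m → ℂ} (e : A *ᵥ v = A *ᵥ w) : v = w :=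
  Matrix.mulVec_injective_of_isUnit ((Matrix.isUnit_iff_isUnit_det _).2 (isUnit_iff_ne_zero.2 h)) e

theorem det_ne_zero_of_inj {A : Matrix m m ℂ} (h : ∀ v, A *ᵥ v = 0 → v = 0) : A.det ≠ 0 := by
  intro h0
  obtain ⟨v, hv, hv2⟩ := Matrix.exists_mulVec_eq_zero_iff.2 h0
  exact hv (h v hv2)

theorem inv_mulVec_eq {A : Matrix m m ℂ} (h : A.det ≠ 0) (v : m → ℂ) : A *ᵥ (A⁻¹ *ᵥ v) = v := by
  rw [Matrix.mulVec_mulVec, Matrix.mul_nonsing_inv _ (isUnit_iff_ne_zero.2 h), Matrix.one_mulVec]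

theorem inv_mulVec_eq' {A : Matrix m m ℂ} (h : A.det ≠ 0) (v : m → ℂ) : A⁻¹ *ᵥ (A *ᵥ v) = v := by
  rw [Matrix.mulVec_mulVec, Matrix.nonsing_inv_mul _ (isUnit_iff_ne_zero.2 h), Matrix.one_mulVec]

open scoped MatrixOrder Matrix.Norms.L2Operator in
theorem psd_factor {E : Matrix m m ℂ} (hE : E.PosSemidef) : ∃ R : Matrix m m ℂ, E = Rᴴ * R := by
  obtain ⟨y, hy⟩ := CStarAlgebra.nonneg_iff_eq_star_mul_self.mp hE.nonneg
  exact ⟨y, hy⟩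

theorem star_of_segment {B E : Matrix m m ℂ} (hB : B.IsHermitian) (hE : Psd E)
    (h : ∀ t : ℝ, 0 ≤ t → t ≤ 1 → (B - (t : ℂ) • E).det ≠ 0) : StarP B E := by
  have hB0 : B.det ≠ 0 := by simpa using h 0 le_rfl zero_le_one
  obtain ⟨R, hR⟩ := psd_factor (psd_iff.1 hE)
  have hX : (R * B⁻¹ * Rᴴ).IsHermitian := Matrix.isHermitian_mul_mul_conjTranspose R hB.inv
  have h1X : (1 - R * B⁻¹ * Rᴴ).IsHermitian := Matrix.isHermitian_one.sub hX
  have hpd : (1 - R * B⁻¹ * Rᴴ).PosDef := by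
    rw [h1X.posDef_iff_eigenvalues_pos]
    intro i
    by_contra hc
    push Not at hc
    set μ := h1X.eigenvalues i
    obtain ⟨y, hy0, hy⟩ : ∃ y : m → ℂ, y ≠ 0 ∧ (1 - R * B⁻¹ * Rᴴ) *ᵥ y = (μ : ℂ) • y := by
      refine ⟨_, ?_, h1X.mulVec_eigenvectorBasis i⟩
      intro h0
      have := h1X.eigenvectorBasis.toBasis.ne_zero i
      apply this
      ext k
      simpa using congrFun h0 k
    have hl : (1:ℝ) ≤ 1 - μ := by linarith
    have hX : R *ᵥ (B⁻¹ *ᵥ (Rᴴ *ᵥ y)) = ((1 - μ : ℝ) : ℂ) • y := by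
      rw [Matrix.sub_mulVec, Matrix.one_mulVec] at hy
      rw [Matrix.mulVec_mulVec, Matrix.mulVec_mulVec]
      rw [sub_eq_iff_eq_add] at hy
      push_cast
      rw [sub_smul, one_smul]
      nth_rewrite 2 [hy]
      simp
    have hne : ((1 - μ : ℝ) : ℂ) ≠ 0 := by
      have : (1 - μ) ≠ 0 := by linarith
      exact_mod_cast this
    set w := B⁻¹ *ᵥ (Rᴴ *ᵥ y) with hw
    have hBw : B *ᵥ w = Rᴴ *ᵥ y := inv_mulVec_eq hB0 _
    have hEw : E *ᵥ w = ((1 - μ : ℝ) : ℂ) • (Rᴴ *ᵥ y) := by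
      rw [hR, ← Matrix.mulVec_mulVec, hX, Matrix.mulVec_smul]
    have hw0 : w ≠ 0 := by
      intro h0
      rw [h0, Matrix.mulVec_zero] at hX
      exact (smul_ne_zero hne hy0) hX.symm
    apply h (1 - μ)⁻¹ (by positivity) (inv_le_one_of_one_le₀ hl)
    apply Matrix.exists_mulVec_eq_zero_iff.1
    refine ⟨w, hw0, ?_⟩
    rw [Matrix.sub_mulVec, Matrix.smul_mulVec, hBw, hEw, smul_smul]
    push_cast at hne ⊢
    rw [inv_mul_cancel₀ hne]; simp
  intro v w hvw hw
  have hw2 : w = B⁻¹ *ᵥ (E *ᵥ v) := by rw [hvw, inv_mulVec_eq' hB0]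
  set z := R *ᵥ v with hz
  have hEv : E *ᵥ v = Rᴴ *ᵥ z := by rw [hR, ← Matrix.mulVec_mulVec]
  have hz0 : z ≠ 0 := by
    intro h0
    rw [hEv, h0] at hw2; simp at hw2; exact hw hw2
  have h1 := (Matrix.posDef_iff_dotProduct_mulVec.1 hpd).2 hz0
  have h2 := (Complex.pos_iff.1 h1).1
  rw [Matrix.sub_mulVec, Matrix.one_mulVec, dotProduct_sub, Complex.sub_re] at h2
  have e1 : q E v v = star z ⬝ᵥ z := by
    rw [q, hEv, Matrix.dotProduct_mulVec, ← Matrix.star_mulVec]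
  have e2 : q B w w = star z ⬝ᵥ (R * B⁻¹ * Rᴴ) *ᵥ z := by
    rw [← Matrix.mulVec_mulVec, ← Matrix.mulVec_mulVec, ← hEv, ← hw2, Matrix.dotProduct_mulVec,
      ← dot_mulVec_herm hB, ← hvw, hEv, Matrix.star_mulVec, Matrix.conjTranspose_conjTranspose]
  rw [e1, e2]; linarith

theorem G_identity {B E : Matrix m m ℂ} (hB : B.IsHermitian) (hE : E.IsHermitian)
    (hB0 : B.det ≠ 0) (hBE : (B - E).det ≠ 0) {v w : m → ℂ} (h : E *ᵥ v = B *ᵥ w) :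
    ((B - E)⁻¹ - B⁻¹) *ᵥ ((B - E) *ᵥ v) = w ∧
    (q ((B - E)⁻¹ - B⁻¹) ((B - E) *ᵥ v) ((B - E) *ᵥ v)).re = (q E v v).re - (q B w w).re := by
  have h1 : ((B - E)⁻¹ - B⁻¹) *ᵥ ((B - E) *ᵥ v) = w := by
    rw [Matrix.sub_mulVec, inv_mulVec_eq' hBE, Matrix.sub_mulVec, h, ← Matrix.mulVec_sub,
      inv_mulVec_eq' hB0]
    simp
  refine ⟨h1, ?_⟩
  rw [q, h1, Matrix.sub_mulVec, h, ← Matrix.mulVec_sub, dot_mulVec_herm hB, q_sub_left, Complex.sub_re]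
  congr 1
  rw [q, ← h, ← q]

theorem inv_mono_of_star {B E : Matrix m m ℂ} (hB : B.IsHermitian) (hE : Psd E)
    (hB0 : B.det ≠ 0) (hBE : (B - E).det ≠ 0) (hs : StarP B E) (p : m → ℂ) :
    0 ≤ (q ((B - E)⁻¹ - B⁻¹) p p).re := by
  set v := (B - E)⁻¹ *ᵥ p with hv
  have hp : p = (B - E) *ᵥ v := (inv_mulVec_eq hBE p).symm
  have hw : E *ᵥ v = B *ᵥ (B⁻¹ *ᵥ (E *ᵥ v)) := (inv_mulVec_eq hB0 _).symm
  set w := B⁻¹ *ᵥ (E *ᵥ v)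
  have := (G_identity hB hE.1 hB0 hBE hw).2
  rw [hp, this]
  by_cases h0 : w = 0
  · rw [h0, q_zero_left]; simpa using hE.2 v
  · linarith [hs v w hw h0]

theorem star_of_inv_mono {B E : Matrix m m ℂ} (hB : B.IsHermitian) (hE : Psd E)
    (hB0 : B.det ≠ 0) (hBE : (B - E).det ≠ 0)
    (hm : ∀ p, 0 ≤ (q ((B - E)⁻¹ - B⁻¹) p p).re) : StarP B E := by
  intro v w hvw hw
  obtain ⟨h1, h2⟩ := G_identity hB hE.1 hB0 hBE hvw
  have h3 := hm ((B - E) *ᵥ v)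
  have hG : Psd ((B - E)⁻¹ - B⁻¹) := ⟨(hB.sub hE.1).inv.sub hB.inv, hm⟩
  by_contra hc
  have h4 : (q ((B - E)⁻¹ - B⁻¹) ((B - E) *ᵥ v) ((B - E) *ᵥ v)).re = 0 := by linarith
  have := psd_ker hG h4
  rw [h1] at this
  exact hw this

theorem mem_range_of_ker {E : Matrix m m ℂ} (hE : E.IsHermitian) {y : m → ℂ}
    (h : ∀ z, E *ᵥ z = 0 → star z ⬝ᵥ y = 0) : ∃ v, E *ᵥ v = y := by
  by_contra hc
  have hy : y ∉ LinearMap.range (Matrix.mulVecLin E) := by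
    rintro ⟨v, hv⟩
    exact hc ⟨v, hv⟩
  obtain ⟨φ, hφ, hle⟩ := Submodule.exists_le_ker_of_notMem hy
  set z : m → ℂ := fun i => star (φ (Pi.single i 1)) with hz
  have hzφ : ∀ x : m → ℂ, star z ⬝ᵥ x = φ x := by
    intro x
    rw [LinearMap.pi_apply_eq_sum_univ φ x]
    simp only [dotProduct, hz, Pi.star_apply, star_star, smul_eq_mul]
    refine Finset.sum_congr rfl fun i _ => ?_
    rw [mul_comm]
    congr 2
    ext j; simp [Pi.single_apply, eq_comm]
  apply hφ
  rw [← hzφ]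
  apply h
  have h2 : ∀ x, star (E *ᵥ z) ⬝ᵥ x = 0 := by
    intro x
    rw [dot_mulVec_herm hE, q, hzφ]
    exact hle ⟨x, rfl⟩
  have h3 := h2 (E *ᵥ z)
  exact dotProduct_star_self_eq_zero.1 h3

theorem det_of_star {B E D : Matrix m m ℂ} (hD : Psd D) (hE : Psd E)
    (hle : ∀ w, (q E w w).re ≤ (q D w w).re) (hs : StarP B D) : (B - E).det ≠ 0 := by
  apply det_ne_zero_of_inj
  intro w hw
  rw [Matrix.sub_mulVec, sub_eq_zero] at hw
  by_contra hw0
  obtain ⟨v, hv⟩ := mem_range_of_ker hD.1 (y := E *ᵥ w) (by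
    intro z hz
    have h1 : (q D z z).re = 0 := by rw [q, hz]; simp
    have h2 : (q E z z).re = 0 := le_antisymm (h1 ▸ hle z) (hE.2 z)
    have h3 := psd_ker hE h2
    change q E z w = 0
    rw [← dot_mulVec_herm hE.1, h3]; simp)
  have h1 := hs v w (hv.trans hw.symm) hw0
  have h2 := hE.2 (v - w)
  have h3 := hle v
  have e1 : q D v v = q E v w := by rw [q, hv, ← q]
  have e2 : q B w w = q E w w := by rw [q, hw, ← q]
  have e3 := q_herm_re hE.1 w v
  simp only [q_sub_left, q_sub_right, Complex.sub_re] at h2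
  rw [e1] at h1 h3
  rw [e2] at h1
  linarith

theorem zero_of_star {B D : Matrix m m ℂ} (hD : Psd D) (hs : StarP B D) {w : m → ℂ}
    (h : ∀ v, 0 ≤ (q B w w).re - 2 * (q B v w).re + (q D v v).re) : w = 0 := by
  by_contra hw0
  obtain ⟨v, hv⟩ := mem_range_of_ker hD.1 (y := B *ᵥ w) (by
    intro z hz
    change q B z w = 0
    by_contra hne
    have hpos : 0 < Complex.normSq (q B z w) := Complex.normSq_pos.2 hne
    set t : ℝ := ((q B w w).re + 1) / Complex.normSq (q B z w)
    have h1 := h (((t : ℂ) * q B z w) • z)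
    have e1 : q D (((t : ℂ) * q B z w) • z) (((t : ℂ) * q B z w) • z) = 0 := by
      rw [q_smul_right, q_smul_left]
      have : q D z z = 0 := by rw [q, hz]; simp
      rw [this]; simp
    have e2 : (q B (((t : ℂ) * q B z w) • z) w).re = (q B w w).re + 1 := by
      rw [q_smul_left]
      have : star ((t : ℂ) * q B z w) * q B z w = ((t * Complex.normSq (q B z w) : ℝ) : ℂ) := by
        push_cast
        rw [← Complex.mul_conj]; simp; ring
      rw [this, Complex.ofReal_re]
      exact div_mul_cancel₀ _ hpos.ne'
    rw [e1, e2] at h1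
    have h2 := h 0
    simp [q_zero_left] at h1 h2
    linarith [h1, h2])
  have h1 := hs v w hv hw0
  have h2 := h v
  have e1 : q B v w = q D v v := by rw [q, ← hv, ← q]
  rw [e1] at h2
  linarith

end part4

section part5

variable {m : Type*} [Fintype m] [DecidableEq m]

/-- squared euclidean norm -/
def nsq (y : m → ℂ) : ℝ := ∑ i, ‖y i‖ ^ 2

theorem nsq_nonneg (y : m → ℂ) : 0 ≤ nsq y := Finset.sum_nonneg fun i _ => by positivity
theorem nsq_le (y : m → ℂ) (i : m) : ‖y i‖ ^ 2 ≤ nsq y :=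
  Finset.single_le_sum (f := fun i => ‖y i‖ ^ 2) (fun i _ => by positivity) (Finset.mem_univ i)
theorem q_one (y : m → ℂ) : q 1 y y = (nsq y : ℂ) := by
  simp only [q, Matrix.one_mulVec, dotProduct, nsq, Pi.star_apply, Complex.star_def]
  push_cast
  refine Finset.sum_congr rfl fun i _ => ?_
  rw [mul_comm, Complex.mul_conj, Complex.normSq_eq_norm_sq]; push_cast; rfl

open scoped MatrixOrder Matrix.Norms.L2Operator in
theorem pd_lower {T : Matrix m m ℂ} (hT : T.PosDef) :
    ∃ l : ℝ, 0 < l ∧ ∀ y, l * nsq y ≤ (q T y y).re := by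
  have hsp : ∀ x ∈ spectrum ℝ T, 0 < x := by
    intro x hx
    rw [hT.1.spectrum_real_eq_range_eigenvalues] at hx
    obtain ⟨i, rfl⟩ := hx
    exact hT.eigenvalues_pos i
  by_cases hm : Nonempty m
  · obtain ⟨r, hr, hle⟩ := (CFC.exists_pos_algebraMap_le_iff (a := T) (ha := hT.1)).2 hsp
    refine ⟨r, hr, fun y => ?_⟩
    have h1 := (psd_iff.2 (Matrix.le_iff.1 hle)).2 y
    have h2 : (algebraMap ℝ (Matrix m m ℂ)) r = (r : ℂ) • 1 := by
      ext i j
      simp [Algebra.algebraMap_eq_smul_one, Matrix.smul_apply]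
    rw [q_mat_sub, h2, q_mat_smul, q_one, Complex.sub_re] at h1
    simp at h1
    linarith
  · refine ⟨1, one_pos, fun y => ?_⟩
    have : y = 0 := by ext i; exact absurd ⟨i⟩ hm
    simp [this, q_zero_left, nsq]

theorem q_self_adj {Q : Matrix m m ℂ} (hQ : Q.IsHermitian) (x y : m → ℂ) (D : Matrix m m ℂ) :
    q D (Q *ᵥ x) y = star x ⬝ᵥ (Q *ᵥ (D *ᵥ y)) := by
  rw [q, Matrix.star_mulVec, hQ.eq, Matrix.dotProduct_mulVec (star x) Q]

/-- plant data -/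
structure Plant (p : ℂ → Matrix m m ℂ) (D Q : Matrix m m ℂ) : Prop where
  nif : NIF (fun s => p s - D)
  mm : MM p
  hD : D.IsHermitian
  hQ : Q.IsHermitian
  hT : (Q + Q * D * Q).PosDef
  hQp : Q.PosDef

theorem plant_id {D Q K p : Matrix m m ℂ} (hD : D.IsHermitian) (hQ : Q.IsHermitian)
    (hK : ∀ u, K *ᵥ u = D *ᵥ (u - Q *ᵥ (K *ᵥ u))) (e u x : m → ℂ)
    (hx : x = p *ᵥ e) (hu : u = e + Q *ᵥ x) :
    star u ⬝ᵥ x - q K u u = q (p - D) e e + q (Q + Q * D * Q) (x - K *ᵥ u) (x - K *ᵥ u) := by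
  set κ := K *ᵥ u with hκ
  set y := x - κ with hy
  set ε := u - Q *ᵥ κ with hε
  have hDε : D *ᵥ ε = κ := (hK u).symm
  have hxy : x = y + κ := by simp [hy]
  have he : e = ε - Q *ᵥ y := by
    have : e = u - Q *ᵥ x := by rw [hu]; simp
    rw [this, hxy, Matrix.mulVec_add, hε]; abel
  have huε : u = ε + Q *ᵥ κ := by simp [hε]
  have e1 : q p e e = star e ⬝ᵥ x := by rw [q, ← hx]
  have e2 : q K u u = star u ⬝ᵥ κ := rfl
  rw [q_mat_sub, e1, e2, q_mat_add]
  have e3 : q (Q * D * Q) y y = q D (Q *ᵥ y) (Q *ᵥ y) := by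
    rw [q_self_adj hQ, q, ← Matrix.mulVec_mulVec, ← Matrix.mulVec_mulVec]
  have e4 : q D e e = star ε ⬝ᵥ κ - star (Q *ᵥ y) ⬝ᵥ κ - star κ ⬝ᵥ (Q *ᵥ y) + q D (Q *ᵥ y) (Q *ᵥ y) := by
    have hexp : ∀ a b, q D (a - b) (a - b) = q D a a - q D a b - q D b a + q D b b := fun a b => by
      simp only [q_sub_left, q_sub_right]; ring
    have a1 : q D ε ε = star ε ⬝ᵥ κ := by rw [q, hDε]
    have a2 : q D (Q *ᵥ y) ε = star (Q *ᵥ y) ⬝ᵥ κ := by rw [q, hDε]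
    have a3 : q D ε (Q *ᵥ y) = star κ ⬝ᵥ (Q *ᵥ y) := by rw [← dot_mulVec_herm hD, hDε]
    rw [he, hexp, a1, a2, a3]; ring
  have e5 : q Q y y = star y ⬝ᵥ Q *ᵥ y := rfl
  rw [e3, e4, e5, huε, he, hxy]
  simp only [star_add, star_sub, add_dotProduct, sub_dotProduct, dotProduct_add]
  have b : ∀ a b, star (Q *ᵥ a) ⬝ᵥ b = star a ⬝ᵥ Q *ᵥ b := fun a b => by
    rw [dot_mulVec_herm hQ, q]
  rw [b, b, b, b]
  ring

namespace Plant
variable {p : ℂ → Matrix m m ℂ} {D Q : Matrix m m ℂ}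

/-- loop-transformed plant -/
def kf (p : ℂ → Matrix m m ℂ) (Q : Matrix m m ℂ) (s : ℂ) : Matrix m m ℂ := p s * (1 + Q * p s)⁻¹
/-- its value at infinity -/
def Kinf (D Q : Matrix m m ℂ) : Matrix m m ℂ := D * (1 + Q * D)⁻¹

theorem detQD (h : Plant p D Q) : (1 + Q * D).det ≠ 0 := by
  have h1 : (Q + Q * D * Q).det ≠ 0 := by
    have := h.hT.det_pos
    exact this.ne'
  have : Q + Q * D * Q = (1 + Q * D) * Q := by rw [add_mul, one_mul]
  rw [this, Matrix.det_mul] at h1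
  exact left_ne_zero_of_mul h1

theorem Kinf_eq (h : Plant p D Q) (u : m → ℂ) :
    Kinf D Q *ᵥ u = D *ᵥ (u - Q *ᵥ (Kinf D Q *ᵥ u)) := by
  have h1 := inv_mulVec_eq h.detQD u
  set e := (1 + Q * D)⁻¹ *ᵥ u with he
  have h2 : Kinf D Q *ᵥ u = D *ᵥ e := by rw [Kinf, ← Matrix.mulVec_mulVec]
  rw [h2]
  congr 1
  rw [Matrix.add_mulVec, Matrix.one_mulVec, ← Matrix.mulVec_mulVec] at h1
  rw [← h1]; simp

theorem Kinf_herm (h : Plant p D Q) : (Kinf D Q).IsHermitian := by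
  apply herm_of_im
  intro u
  have h2 := h.Kinf_eq u
  set κ := Kinf D Q *ᵥ u with hκ
  set ε := u - Q *ᵥ κ with hε
  have : q (Kinf D Q) u u = q D ε ε + q Q κ κ := by
    have hu : u = ε + Q *ᵥ κ := by simp [hε]
    rw [q, ← hκ, q, ← h2]
    nth_rewrite 1 [hu]
    rw [star_add, add_dotProduct, dot_mulVec_herm h.hQ]
  rw [this, Complex.add_im, q_herm_im h.hD, q_herm_im h.hQ, add_zero]

theorem detQp (h : Plant p D Q) {s : ℂ} (hs : 0 < s.re) : (1 + Q * p s).det ≠ 0 := by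
  apply det_ne_zero_of_inj
  intro e he
  rw [Matrix.add_mulVec, Matrix.one_mulVec, ← Matrix.mulVec_mulVec] at he
  have hid := plant_id (p := p s) h.hD h.hQ h.Kinf_eq e 0 (p s *ᵥ e) rfl he.symm
  have hpr := h.nif.pr s hs e
  simp only [Matrix.mulVec_zero, sub_zero, q_zero_left, star_zero, zero_dotProduct] at hid
  have h1 : q (p s - D) e e = - q (Q + Q * D * Q) (p s *ᵥ e) (p s *ᵥ e) := by
    linear_combination -hid
  rw [h1] at hpr
  have him := q_herm_im h.hT.1 (p s *ᵥ e)
  have hx : p s *ᵥ e = 0 := by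
    by_contra hx
    have h3 := (Complex.pos_iff.1 (h.hT.dotProduct_mulVec_pos hx)).1
    change 0 < (q _ _ _).re at h3
    simp [Complex.mul_re, him] at hpr
    nlinarith
  rw [hx] at he; simpa using he

theorem key_id (h : Plant p D Q) {s : ℂ} (hs : (1 + Q * p s).det ≠ 0) (u : m → ℂ) :
    q (kf p Q s - Kinf D Q) u u = q (p s - D) ((1 + Q * p s)⁻¹ *ᵥ u) ((1 + Q * p s)⁻¹ *ᵥ u)
      + q (Q + Q * D * Q) ((kf p Q s - Kinf D Q) *ᵥ u) ((kf p Q s - Kinf D Q) *ᵥ u) := by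
  have h1 := inv_mulVec_eq hs u
  set e := (1 + Q * p s)⁻¹ *ᵥ u with he
  have hx : kf p Q s *ᵥ u = p s *ᵥ e := by rw [kf, ← Matrix.mulVec_mulVec]
  rw [Matrix.add_mulVec, Matrix.one_mulVec, ← Matrix.mulVec_mulVec] at h1
  have hid := plant_id (p := p s) h.hD h.hQ h.Kinf_eq e u (p s *ᵥ e) rfl h1.symm
  rw [Matrix.sub_mulVec, hx, ← hid, q_mat_sub]
  congr 1
  rw [q, hx]

theorem k_lower (h : Plant p D Q) {s : ℂ} (hs : 0 < s.re) (u : m → ℂ) :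
    s.re * (q (Q + Q * D * Q) ((kf p Q s - Kinf D Q) *ᵥ u) ((kf p Q s - Kinf D Q) *ᵥ u)).re
      ≤ (s * q (kf p Q s - Kinf D Q) u u).re := by
  rw [h.key_id (h.detQp hs) u, mul_add, Complex.add_re]
  have h1 := h.nif.pr s hs ((1 + Q * p s)⁻¹ *ᵥ u)
  rw [Complex.mul_re s (q (Q + Q * D * Q) _ _), q_herm_im h.hT.1]
  linarith

theorem k_bound (h : Plant p D Q) : ∃ B : ℝ, 0 < B ∧ ∀ s : ℂ, 0 < s.re → ∀ i j,
    ‖(kf p Q s - Kinf D Q) i j‖ ≤ B * ‖s‖ / s.re := by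
  obtain ⟨l, hl, hlow⟩ := pd_lower h.hT
  refine ⟨l⁻¹, by positivity, fun s hs i j => ?_⟩
  have h1 := h.k_lower hs (Pi.single j 1)
  set M := kf p Q s - Kinf D Q with hM
  set y := M *ᵥ (Pi.single j 1) with hy
  have hyi : ∀ i, y i = M i j := by intro i; simp [hy]
  have hq : q M (Pi.single j 1) (Pi.single j 1) = y j := by rw [q_single, hyi]
  rw [hq] at h1
  have h2 := hlow y
  have h3 : (s * y j).re ≤ ‖s‖ * ‖y j‖ := by
    rw [← norm_mul]; exact Complex.re_le_norm _
  have h4 : s.re * (l * nsq y) ≤ ‖s‖ * ‖y j‖ := by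
    have := mul_le_mul_of_nonneg_left h2 hs.le
    linarith
  have hK : ∀ i, ‖y i‖ ^ 2 ≤ (l⁻¹ * ‖s‖ / s.re) * ‖y j‖ := by
    intro i
    have h5 := nsq_le y i
    have h6 : s.re * (l * ‖y i‖ ^ 2) ≤ ‖s‖ * ‖y j‖ := by
      refine le_trans ?_ h4
      gcongr
    have : (l⁻¹ * ‖s‖ / s.re) * ‖y j‖ = (‖s‖ * ‖y j‖) / (s.re * l) := by
      field_simp
    rw [this, le_div_iff₀ (by positivity)]
    linarith
  set c := l⁻¹ * ‖s‖ / s.re with hc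
  have hc0 : 0 ≤ c := by positivity
  have hj : ‖y j‖ ≤ c := by
    have := hK j
    by_contra hcon
    push Not at hcon
    nlinarith [norm_nonneg (y j)]
  have hi := hK i
  rw [← hyi]
  by_contra hcon
  push Not at hcon
  nlinarith [norm_nonneg (y i), norm_nonneg (y j)]

theorem k_mm (h : Plant p D Q) : MM (fun s => kf p Q s - Kinf D Q) :=
  (h.mm.mul ((MM.const 1).add ((MM.const Q).mul h.mm)).inv).sub (MM.const _)

theorem p_inf (h : Plant p D Q) : Tendsto p (Bornology.cobounded ℂ) (𝓝 D) := by
  have := h.nif.inf.add_const D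
  simpa using this

theorem k_inf (h : Plant p D Q) : Tendsto (kf p Q) (Bornology.cobounded ℂ) (𝓝 (Kinf D Q)) := by
  unfold kf Kinf
  exact h.p_inf.mul (tendsto_matInv (tendsto_const_nhds.add (tendsto_const_nhds.mul h.p_inf)) h.detQD)

theorem k_ni (h : Plant p D Q) : ∃ S : Set ℝ, S.Finite ∧ ∀ ω, ω ∉ S → ∀ w,
    ω * (q (kf p Q (jw ω) - Kinf D Q) w w).im ≤ 0 := by
  obtain ⟨S, hS, hni⟩ := h.nif.ni
  refine ⟨S, hS, fun ω hω w => ?_⟩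
  by_cases hd : (1 + Q * p (jw ω)).det = 0
  · have : kf p Q (jw ω) = 0 := by
      rw [kf, Matrix.nonsing_inv_apply_not_isUnit _ (by simpa using hd), mul_zero]
    rw [this, q_mat_sub, q_mat_zero, zero_sub, Complex.neg_im, q_herm_im h.Kinf_herm]; simp
  · rw [h.key_id hd, Complex.add_im, q_herm_im h.hT.1, add_zero]
    exact hni ω hω _

theorem k_nif (h : Plant p D Q) : NIF (fun s => kf p Q s - Kinf D Q) := by
  obtain ⟨B, hB, hbd⟩ := h.k_bound
  have hpr : ∀ s : ℂ, 0 < s.re → ∀ u, 0 ≤ (s * q (kf p Q s - Kinf D Q) u u).re := by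
    intro s hs u
    refine le_trans ?_ (h.k_lower hs u)
    exact mul_nonneg hs.le ((psd_iff.2 h.hT.posSemidef).2 _)
  have hpd : ∀ s : ℂ, 0 < s.re → ∀ i j, DifferentiableAt ℂ (fun s => p s i j) s := by
    intro s hs i j
    have := (h.nif.diff s hs i j).add_const (D i j)
    simpa using this
  refine ⟨h.k_mm, ?_, ?_, ?_, h.k_ni⟩
  · intro s hs i j
    have h2 : ∀ i j, DifferentiableAt ℂ (fun s => (1 + Q * p s) i j) s := by
      intro i j
      have := diffAt_mul (F := fun _ => Q) (fun i j => differentiableAt_const _) (hpd s hs) i j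
      exact (differentiableAt_const _).add this
    exact (diffAt_mul (hpd s hs) (diffAt_inv h2 (h.detQp hs)) i j).sub_const _
  · intro ω
    have hray : Tendsto (fun x : ℝ => jw ω + x) (𝓝[>] 0) (𝓝[≠] (jw ω)) := by
      refine tendsto_nhdsWithin_iff.2 ⟨?_, ?_⟩
      · have : Tendsto (fun x : ℝ => jw ω + x) (𝓝 0) (𝓝 (jw ω + (0:ℝ))) :=
          (continuous_const.add Complex.continuous_ofReal).tendsto 0
        simpa using this.mono_left nhdsWithin_le_nhds
      · filter_upwards [self_mem_nhdsWithin] with x hx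
        have : x ≠ 0 := ne_of_gt hx
        simpa using this
    have hex : ∃ R, Tendsto (fun s => ((s - jw ω) * s) • (kf p Q s - Kinf D Q)) (𝓝[≠] (jw ω)) (𝓝 R) := by
      apply tendsto_mat_of_ex
      intro i j
      simp only [Matrix.smul_apply, smul_eq_mul]
      refine mero_tendsto (B := B * (‖jw ω‖ + 1) ^ 2) ?_ ?_
      · exact (((Mero.id.sub (Mero.const _)).mul Mero.id).mul (h.k_mm i j)).1 _
      · refine hray.frequently (Eventually.frequently ?_)
        have h1 : ∀ᶠ x : ℝ in 𝓝[>] 0, x < 1 := mem_nhdsWithin_of_mem_nhds (Iio_mem_nhds one_pos)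
        filter_upwards [self_mem_nhdsWithin, h1] with x hx hx1
        have hx : 0 < x := hx
        have hre : (jw ω + (x:ℂ)).re = x := by simp [jw_re]
        have h2 := hbd (jw ω + x) (by rw [hre]; exact hx) i j
        rw [hre] at h2
        have h3 : ‖jw ω + (x:ℂ)‖ ≤ ‖jw ω‖ + 1 := by
          refine (norm_add_le _ _).trans ?_
          simp [abs_of_pos hx]; linarith
        rw [norm_mul, norm_mul]
        have h4 : ‖jw ω + (x:ℂ) - jw ω‖ = x := by simp [abs_of_pos hx]
        rw [h4]
        calc x * ‖jw ω + (x:ℂ)‖ * ‖(kf p Q (jw ω + x) - Kinf D Q) i j‖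
            ≤ x * ‖jw ω + (x:ℂ)‖ * (B * ‖jw ω + (x:ℂ)‖ / x) := by gcongr
          _ = B * ‖jw ω + (x:ℂ)‖ ^ 2 := by field_simp
          _ ≤ _ := by gcongr
    obtain ⟨R, hR⟩ := hex
    refine ⟨R, fun w => ?_, hR⟩
    have hq := tendsto_q hR w w
    rw [Complex.nonneg_iff]
    constructor
    · refine ge_of_tendsto ((Complex.continuous_re.tendsto _).comp (hq.comp hray)) ?_
      filter_upwards [self_mem_nhdsWithin] with x hx
      have hx : 0 < x := hx
      have hre : (jw ω + (x:ℂ)).re = x := by simp [jw_re]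
      have := hpr (jw ω + x) (by rw [hre]; exact hx) w
      simp only [Function.comp, q_mat_smul]
      have e : jw ω + (x:ℂ) - jw ω = x := by simp
      rw [e, mul_assoc, Complex.re_ofReal_mul]
      positivity
    · obtain ⟨S, hS, hni⟩ := h.k_ni
      have hT := (Complex.continuous_im.tendsto _).comp (hq.comp (tendsto_jw ω))
      have hev := eventually_not_mem_finite hS ω
      have hval : ∀ y, (q (((jw y - jw ω) * jw y) • (kf p Q (jw y) - Kinf D Q)) w w).im =
          (y - ω) * (- (y * (q (kf p Q (jw y) - Kinf D Q) w w).im)) := by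
        intro y
        rw [q_mat_smul]
        simp only [Complex.mul_im, Complex.mul_re, Complex.sub_re, Complex.sub_im, jw_re, jw_im]
        ring
      apply le_antisymm
      · have h1 : 𝓝[>] ω ≤ 𝓝[≠] ω := nhdsWithin_mono _ fun x hx => ne_of_gt hx
        refine ge_of_tendsto (hT.mono_left h1) ?_
        filter_upwards [h1 hev, self_mem_nhdsWithin] with y h2 h3
        have h3 : ω < y := h3
        have := hni y h2 w
        simp only [Function.comp, hval]
        exact mul_nonneg (by linarith) (by linarith)
      · have h1 : 𝓝[<] ω ≤ 𝓝[≠] ω := nhdsWithin_mono _ fun x hx => ne_of_lt hx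
        refine le_of_tendsto (hT.mono_left h1) ?_
        filter_upwards [h1 hev, self_mem_nhdsWithin] with y h2 h3
        have h3 : y < ω := h3
        have := hni y h2 w
        simp only [Function.comp, hval]
        exact mul_nonpos_of_nonpos_of_nonneg (by linarith) (by linarith)
  · have := h.k_inf.sub_const (Kinf D Q)
    simpa using this

theorem k_zero (h : Plant p D Q) : ∃ K0, Tendsto (kf p Q) (𝓝[≠] 0) (𝓝 K0) := by
  obtain ⟨B, hB, hbd⟩ := h.k_bound
  have hex : ∃ M0, Tendsto (fun s => kf p Q s - Kinf D Q) (𝓝[≠] 0) (𝓝 M0) := by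
    apply tendsto_mat_of_ex
    intro i j
    refine mero_tendsto (B := B) ((h.k_mm i j).1 0) ?_
    have hray : Tendsto (fun x : ℝ => (x:ℂ)) (𝓝[>] 0) (𝓝[≠] 0) := by
      refine tendsto_nhdsWithin_iff.2 ⟨?_, ?_⟩
      · have : Tendsto (fun x : ℝ => (x:ℂ)) (𝓝 0) (𝓝 ((0:ℝ):ℂ)) := Complex.continuous_ofReal.tendsto 0
        simpa using this.mono_left nhdsWithin_le_nhds
      · filter_upwards [self_mem_nhdsWithin] with x hx
        have : x ≠ 0 := ne_of_gt hx
        simpa using this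
    refine hray.frequently (Eventually.frequently ?_)
    filter_upwards [self_mem_nhdsWithin] with x hx
    have hx : 0 < x := hx
    have := hbd x (by simpa using hx) i j
    simpa [abs_of_pos hx, mul_div_assoc, div_self hx.ne'] using this
  obtain ⟨M0, h0⟩ := hex
  refine ⟨M0 + Kinf D Q, ?_⟩
  simpa using h0.add_const (Kinf D Q)

end Plant

end part5

section part6

variable {m : Type*} [Fintype m] [DecidableEq m]

theorem mem_spec {M : Matrix m m ℂ} {μ : ℂ} :
    μ ∈ spectrum ℂ M ↔ ∃ v : m → ℂ, v ≠ 0 ∧ M *ᵥ v = μ • v := by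
  rw [spectrum.mem_iff, Matrix.isUnit_iff_isUnit_det, isUnit_iff_ne_zero, not_not,
    ← Matrix.exists_mulVec_eq_zero_iff]
  refine exists_congr fun v => and_congr_right fun _ => ?_
  rw [Matrix.sub_mulVec, sub_eq_zero, Algebra.algebraMap_eq_smul_one, Matrix.smul_mulVec,
    Matrix.one_mulVec, eq_comm]

theorem q_conjTranspose (A : Matrix m m ℂ) (w v : m → ℂ) : q Aᴴ w v = star (q A v w) := by
  simp only [q]
  rw [Matrix.star_dotProduct, Matrix.star_mulVec, ← Matrix.dotProduct_mulVec,
    Matrix.conjTranspose_conjTranspose]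

theorem q_niKer (A : Matrix (Fin n) (Fin n) ℂ) (w : Fin n → ℂ) :
    q (niKer A) w w = ((-2 * (q A w w).im : ℝ) : ℂ) := by
  rw [niKer, q_mat_smul, q_mat_sub, q_conjTranspose]
  apply Complex.ext <;> simp <;> ring

theorem q_map_star (A : Matrix m m ℂ) (w : m → ℂ) :
    q (A.map star) w w = star (q A (star w) (star w)) := by
  simp only [q_sum, star_sum, star_mul', Matrix.map_apply, Pi.star_apply, star_star]

theorem evalM_conj (G : Matrix (Fin n) (Fin n) (RatFunc ℝ)) (s : ℂ) :
    evalM G (star s) = (evalM G s).map star := by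
  ext i j; simp only [evalM, Matrix.of_apply, Matrix.map_apply, evalC_conj]

theorem jw_neg (ω : ℝ) : jw (-ω) = star (jw ω) := by simp [jw]

theorem q_im_nonpos_of_psd {A : Matrix (Fin n) (Fin n) ℂ} (h : (niKer A).PosSemidef) (w : Fin n → ℂ) :
    (q A w w).im ≤ 0 := by
  have h1 := (psd_iff.2 h).2 w
  rw [q_niKer, Complex.ofReal_re] at h1
  linarith

theorem q_im_neg_of_pd {A : Matrix (Fin n) (Fin n) ℂ} (h : (niKer A).PosDef) {w : Fin n → ℂ} (hw : w ≠ 0) :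
    (q A w w).im < 0 := by
  have h1 := h.dotProduct_mulVec_pos hw
  change 0 < q _ _ _ at h1
  rw [q_niKer, Complex.zero_lt_real] at h1
  linarith

theorem ni_evalM {G : Matrix (Fin n) (Fin n) (RatFunc ℝ)} (hG : IsNI G) :
    ∃ S : Set ℝ, S.Finite ∧ ∀ ω, ω ∉ S → ∀ w, ω * (q (evalM G (jw ω)) w w).im ≤ 0 := by
  have hf : (jw ⁻¹' {s | HasPole G s}).Finite :=
    (finite_hasPole G).preimage jw_injective.injOn
  refine ⟨(jw ⁻¹' {s | HasPole G s}) ∪ (Neg.neg ⁻¹' (jw ⁻¹' {s | HasPole G s})),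
    hf.union (hf.preimage neg_injective.injOn), fun ω hω w => ?_⟩
  rw [Set.mem_union, not_or] at hω
  rcases lt_trichotomy ω 0 with h | h | h
  · have h1 := q_im_nonpos_of_psd (hG.2.2.1 (-ω) (by linarith) hω.2) (star w)
    have h2 : jw ω = star (jw (-ω)) := by rw [← jw_neg, neg_neg]
    rw [h2, evalM_conj, q_map_star, Complex.star_def, Complex.conj_im]
    nlinarith
  · simp [h]
  · have h1 := q_im_nonpos_of_psd (hG.2.2.1 ω h hω.1) w
    nlinarith

theorem evalM_cont {G : Matrix (Fin n) (Fin n) (RatFunc ℝ)} {s : ℂ} (h : ¬ HasPole G s) :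
    Tendsto (evalM G) (𝓝 s) (𝓝 (evalM G s)) := by
  rw [tendsto_mat]
  intro i j
  exact (diffAt_evalC (fun hp => h ⟨i, j, hp⟩)).continuousAt

/-- real matrix at infinity -/
def cinf (G : Matrix (Fin n) (Fin n) (RatFunc ℝ)) : Matrix (Fin n) (Fin n) ℂ :=
  (evalInf G).map Complex.ofReal

theorem evalM_inf {G : Matrix (Fin n) (Fin n) (RatFunc ℝ)} (h : Proper G) :
    Tendsto (evalM G) (Bornology.cobounded ℂ) (𝓝 (cinf G)) := by
  rw [tendsto_mat]
  intro i j
  exact tendsto_atInfinity (h i j)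

theorem cinf_herm {G : Matrix (Fin n) (Fin n) (RatFunc ℝ)} (hG : IsNI G) : (cinf G).IsHermitian :=
  herm_of_im fun v => im_zero_inf (ni_evalM hG) (evalM_inf hG.1) v

theorem ax_pos {G : Matrix (Fin n) (Fin n) (RatFunc ℝ)} (hG : IsNI G) (ω : ℝ) (hω : 0 ≤ ω) :
    ∃ R : Matrix (Fin n) (Fin n) ℂ, (∀ w, 0 ≤ q R w w) ∧
    Tendsto (fun s => ((s - jw ω) * s) • evalM G s) (𝓝[≠] (jw ω)) (𝓝 R) := by
  have hid : Tendsto (fun s : ℂ => s) (𝓝[≠] (jw ω)) (𝓝 (jw ω)) := tendsto_id.mono_left nhdsWithin_le_nhds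
  by_cases hp : HasPole G (jw ω)
  · rcases hω.eq_or_lt with h | h
    · subst h
      rw [jw_zero] at hp ⊢
      obtain ⟨R, hR, hT⟩ := (hG.2.2.2.2 hp).2
      refine ⟨R, psd_nonneg (psd_iff.2 hR), ?_⟩
      refine hT.congr fun s => ?_
      rw [sub_zero, sq]
    · obtain ⟨R, hR, hT⟩ := hG.2.2.2.1 ω h hp
      refine ⟨(ω : ℂ) • R, fun w => ?_, ?_⟩
      · rw [q_mat_smul]
        exact mul_nonneg (by exact_mod_cast h.le) (psd_nonneg (psd_iff.2 hR) w)
      · have h1 : Tendsto (fun s : ℂ => -Complex.I * s) (𝓝[≠] (jw ω)) (𝓝 (-Complex.I * jw ω)) :=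
          tendsto_const_nhds.mul hid
        have h2 := h1.smul hT
        have h3 : -Complex.I * jw ω = ω := by
          rw [jw, ← mul_assoc]; simp
        rw [h3] at h2
        refine h2.congr fun s => ?_
        rw [smul_smul, smul_smul]
        congr 1
        linear_combination (-s * (s - jw ω)) * Complex.I_mul_I
  · refine ⟨0, fun w => by rw [q_mat_zero], ?_⟩
    have h1 := ((hid.sub_const (jw ω)).mul hid).smul ((evalM_cont hp).mono_left nhdsWithin_le_nhds)
    simpa using h1

theorem ax_all {G : Matrix (Fin n) (Fin n) (RatFunc ℝ)} (hG : IsNI G) (ω : ℝ) :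
    ∃ R : Matrix (Fin n) (Fin n) ℂ, (∀ w, 0 ≤ q R w w) ∧
    Tendsto (fun s => ((s - jw ω) * s) • evalM G s) (𝓝[≠] (jw ω)) (𝓝 R) := by
  rcases le_total 0 ω with h | h
  · exact ax_pos hG ω h
  obtain ⟨R, hR, hT⟩ := ax_pos hG (-ω) (by linarith)
  refine ⟨R.map star, fun w => ?_, ?_⟩
  · rw [q_map_star]
    exact star_nonneg_iff.2 (hR _)
  · have hs : Tendsto (fun s : ℂ => star s) (𝓝[≠] (jw ω)) (𝓝[≠] (jw (-ω))) := by
      rw [jw_neg]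
      refine tendsto_nhdsWithin_iff.2 ⟨(continuous_star.tendsto _).mono_left nhdsWithin_le_nhds, ?_⟩
      filter_upwards [self_mem_nhdsWithin] with s hs
      exact fun h => hs (star_injective h)
    have h1 := hT.comp hs
    rw [tendsto_mat] at h1 ⊢
    intro i j
    have h2 := (continuous_star.tendsto _).comp (h1 i j)
    refine h2.congr fun s => ?_
    simp only [Function.comp, Matrix.smul_apply, smul_eq_mul, star_mul', star_sub, star_star, jw_neg,
      evalM_conj, Matrix.map_apply]

theorem nif_of_ni {G : Matrix (Fin n) (Fin n) (RatFunc ℝ)} (hG : IsNI G) :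
    NIF (fun s => evalM G s - cinf G) where
  mm := (mm_evalM G).sub (MM.const _)
  diff s hs i j := by
    have h1 : DifferentiableAt ℂ (evalC (G i j)) s := diffAt_evalC (fun hp => hG.2.1 s hs ⟨i, j, hp⟩)
    exact h1.sub_const _
  ax ω := by
    obtain ⟨R, hR, hT⟩ := ax_all hG ω
    refine ⟨R, hR, ?_⟩
    have hid : Tendsto (fun s : ℂ => s) (𝓝[≠] (jw ω)) (𝓝 (jw ω)) := tendsto_id.mono_left nhdsWithin_le_nhds
    have h1 := hT.sub (((hid.sub_const (jw ω)).mul hid).smul_const (cinf G))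
    simp only [sub_self, zero_mul, zero_smul, sub_zero] at h1
    refine h1.congr fun s => ?_
    rw [smul_sub]
  inf := by
    have := (evalM_inf hG.1).sub_const (cinf G)
    simpa using this
  ni := by
    obtain ⟨S, hS, h⟩ := ni_evalM hG
    refine ⟨S, hS, fun ω hω w => ?_⟩
    rw [q_mat_sub, Complex.sub_im, q_herm_im (cinf_herm hG), sub_zero]
    exact h ω hω w

theorem ni_of_sni {G : Matrix (Fin n) (Fin n) (RatFunc ℝ)} (hG : IsSNI G) : IsNI G := by
  have hnp : ∀ s : ℂ, 0 ≤ s.re → ¬ HasPole G s := fun s hs ⟨i, j, h⟩ => hG.1.2 s hs i j h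
  refine ⟨hG.1.1, fun s hs => hnp s hs.le, fun ω hω _ => (hG.2 ω hω).posSemidef, fun ω hω h => ?_,
    fun h => ?_⟩
  · exact absurd h (hnp _ (by rw [jw_re]))
  · exact absurd h (hnp _ (by simp))

theorem sni_im {G : Matrix (Fin n) (Fin n) (RatFunc ℝ)} (hG : IsSNI G) {ω : ℝ} (hω : ω ≠ 0)
    {w : Fin n → ℂ} (hw : w ≠ 0) : ω * (q (evalM G (jw ω)) w w).im < 0 := by
  rcases lt_or_gt_of_ne hω with h | h
  · have h1 := q_im_neg_of_pd (hG.2 (-ω) (by linarith)) (w := star w) (by simpa using hw)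
    have h2 : jw ω = star (jw (-ω)) := by rw [← jw_neg, neg_neg]
    rw [h2, evalM_conj, q_map_star, Complex.star_def, Complex.conj_im]
    nlinarith
  · have h1 := q_im_neg_of_pd (hG.2 ω h) hw
    nlinarith

open scoped MatrixOrder in
theorem real_pd_factor {A : Matrix (Fin n) (Fin n) ℝ} (h : A.PosDef) :
    ∃ S : Matrix (Fin n) (Fin n) ℂ, S.det ≠ 0 ∧ A.map Complex.ofReal = Sᴴ * S := by
  obtain ⟨y, hy⟩ : ∃ B : Matrix (Fin n) (Fin n) ℝ, A = Bᴴ * B := by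
    obtain ⟨y, hy⟩ := CStarAlgebra.nonneg_iff_eq_star_mul_self.mp h.posSemidef.nonneg
    exact ⟨y, hy⟩
  have hm : A.map Complex.ofReal = (y.map Complex.ofReal)ᴴ * y.map Complex.ofReal := by
    rw [hy]
    ext i j
    simp [Matrix.mul_apply]
  refine ⟨y.map Complex.ofReal, ?_, hm⟩
  have h1 : A.det ≠ 0 := h.det_pos.ne'
  rw [hy, Matrix.det_mul] at h1
  have h2 := right_ne_zero_of_mul h1
  have h3 : (y.map Complex.ofReal).det = (y.det : ℂ) := by
    have := RingHom.map_det Complex.ofRealHom y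
    exact this.symm
  rw [h3]; exact_mod_cast h2

theorem map_mul_ofReal (A B : Matrix (Fin n) (Fin n) ℝ) :
    (A * B).map Complex.ofReal = A.map Complex.ofReal * B.map Complex.ofReal :=
  Matrix.map_mul (f := Complex.ofRealHom)

theorem T_posDef {D S : Matrix (Fin n) (Fin n) ℂ} (hD : D.IsHermitian) (hS : S.det ≠ 0)
    (hg : eigsRealAndLT (-(D * (Sᴴ * S))) 1) : (Sᴴ * S + Sᴴ * S * D * (Sᴴ * S)).PosDef := by
  have hX : (S * D * Sᴴ).IsHermitian := Matrix.isHermitian_mul_mul_conjTranspose S hD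
  have h1X : (1 + S * D * Sᴴ).IsHermitian := Matrix.isHermitian_one.add hX
  have hpd : (1 + S * D * Sᴴ).PosDef := by
    rw [h1X.posDef_iff_eigenvalues_pos]
    intro i
    by_contra hc
    push Not at hc
    set μ := h1X.eigenvalues i
    obtain ⟨v, hv0, hv⟩ : ∃ y : Fin n → ℂ, y ≠ 0 ∧ (1 + S * D * Sᴴ) *ᵥ y = (μ : ℂ) • y := by
      refine ⟨_, ?_, h1X.mulVec_eigenvectorBasis i⟩
      intro h0
      have := h1X.eigenvectorBasis.toBasis.ne_zero i
      apply this
      ext j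
      simpa using congrFun h0 j
    have hv' : S *ᵥ (D *ᵥ (Sᴴ *ᵥ v)) = ((μ : ℂ) - 1) • v := by
      rw [Matrix.add_mulVec, Matrix.one_mulVec] at hv
      rw [sub_smul, ← hv, one_smul, Matrix.mulVec_mulVec, Matrix.mulVec_mulVec, mul_assoc]; abel
    have hne : ((μ : ℂ) - 1) ≠ 0 := by
      have : μ - 1 ≠ 0 := by linarith
      exact_mod_cast this
    have hy0 : D *ᵥ (Sᴴ *ᵥ v) ≠ 0 := by
      intro h0
      rw [h0, Matrix.mulVec_zero] at hv'
      exact (smul_ne_zero hne hv0) hv'.symm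
    have h3 := hg (((1 - μ : ℝ)) : ℂ) (mem_spec.2 ⟨_, hy0, ?_⟩)
    · simp at h3; linarith
    · rw [Matrix.neg_mulVec, ← Matrix.mulVec_mulVec, ← Matrix.mulVec_mulVec, hv', Matrix.mulVec_smul,
        Matrix.mulVec_smul, ← neg_smul]
      congr 1; push_cast; ring
  have h2 := hpd.conjTranspose_mul_mul_same (B := S)
    (fun a b h => mulVec_inj_of_det hS h)
  convert h2 using 1
  noncomm_ring

theorem plant_of {P : Matrix (Fin n) (Fin n) (RatFunc ℝ)} {Ψ : Matrix (Fin n) (Fin n) ℝ}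
    (hP : IsNI P) (hΨneg : (-Ψ).PosDef) (hgain : maxEigLT (evalInf P * Ψ) 1) :
    Plant (evalM P) (cinf P) (-(Ψ.map Complex.ofReal)) := by
  obtain ⟨S, hS, hSS⟩ := real_pd_factor hΨneg
  have h1 : -(Ψ.map Complex.ofReal) = Sᴴ * S := by rw [← hSS]; ext i j; simp
  have hQp : (-(Ψ.map Complex.ofReal)).PosDef := by
    rw [h1]
    have := Matrix.PosDef.one.conjTranspose_mul_mul_same (B := S) (fun a b h => mulVec_inj_of_det hS h)
    simpa using this
  refine ⟨nif_of_ni hP, mm_evalM P, cinf_herm hP, hQp.1, ?_, hQp⟩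
  rw [h1]
  apply T_posDef (cinf_herm hP) hS
  rw [maxEigLT, map_mul_ofReal] at hgain
  rw [← h1, mul_neg, neg_neg]
  exact hgain

end part6

section part7

variable {m : Type*} [Fintype m] [DecidableEq m]

/-- block loop matrix -/
def Nb (A K : Matrix m m ℂ) : Matrix (m ⊕ m) (m ⊕ m) ℂ := Matrix.fromBlocks (-A) 1 1 (-K)
/-- block diagonal matrix -/
def dg (E F : Matrix m m ℂ) : Matrix (m ⊕ m) (m ⊕ m) ℂ := Matrix.fromBlocks E 0 0 F

theorem elim_eq (w : m ⊕ m → ℂ) : w = Sum.elim (w ∘ Sum.inl) (w ∘ Sum.inr) := by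
  ext i; cases i <;> rfl

theorem elim_zero (x u : m → ℂ) (h : Sum.elim x u = (0 : m ⊕ m → ℂ)) : x = 0 ∧ u = 0 :=
  ⟨funext fun i => congrFun h (Sum.inl i), funext fun i => congrFun h (Sum.inr i)⟩

theorem Nb_mulVec (A K : Matrix m m ℂ) (x u : m → ℂ) :
    Nb A K *ᵥ Sum.elim x u = Sum.elim (u - A *ᵥ x) (x - K *ᵥ u) := by
  rw [Nb, Matrix.fromBlocks_mulVec]
  congr 1 <;> simp [Matrix.neg_mulVec, sub_eq_add_neg, add_comm]

theorem dot_elim (x u x' u' : m → ℂ) :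
    star (Sum.elim x u) ⬝ᵥ Sum.elim x' u' = star x ⬝ᵥ x' + star u ⬝ᵥ u' := by
  simp [dotProduct]

theorem q_dg (E F : Matrix m m ℂ) (x u x' u' : m → ℂ) :
    q (dg E F) (Sum.elim x u) (Sum.elim x' u') = q E x x' + q F u u' := by
  rw [q, dg, Matrix.fromBlocks_mulVec, dot_elim]
  simp [q]

theorem q_Nb (A K : Matrix m m ℂ) (x u x' u' : m → ℂ) :
    q (Nb A K) (Sum.elim x u) (Sum.elim x' u') =
      star x ⬝ᵥ (u' - A *ᵥ x') + star u ⬝ᵥ (x' - K *ᵥ u') := by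
  rw [q, Nb_mulVec, dot_elim]

theorem Nb_det {A K : Matrix m m ℂ} : (Nb A K).det ≠ 0 ↔ ∀ x, x = K *ᵥ (A *ᵥ x) → x = 0 := by
  constructor
  · intro h x hx
    have h1 : Nb A K *ᵥ Sum.elim x (A *ᵥ x) = Nb A K *ᵥ 0 := by
      rw [Nb_mulVec, Matrix.mulVec_zero, ← hx]
      ext i; cases i <;> simp
    exact (elim_zero _ _ (mulVec_inj_of_det h h1)).1
  · intro h
    apply det_ne_zero_of_inj
    intro v hv
    rw [elim_eq v, Nb_mulVec] at hv
    obtain ⟨h1, h2⟩ := elim_zero _ _ hv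
    rw [sub_eq_zero] at h1 h2
    have h3 := h _ (by rw [← h1]; exact h2)
    rw [h3, Matrix.mulVec_zero] at h1
    rw [elim_eq v, h1, h3]
    ext i; cases i <;> rfl

theorem Nb_det' {A K : Matrix m m ℂ} : (Nb A K).det ≠ 0 ↔ ∀ u, u = A *ᵥ (K *ᵥ u) → u = 0 := by
  rw [Nb_det]
  constructor
  · intro h u hu
    have := h (K *ᵥ u) (by rw [← hu])
    rw [hu, this, Matrix.mulVec_zero]
  · intro h u hu
    have := h (A *ᵥ u) (by rw [← hu])
    rw [hu, this, Matrix.mulVec_zero]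

theorem Nb_herm {A K : Matrix m m ℂ} (hA : A.IsHermitian) (hK : K.IsHermitian) : (Nb A K).IsHermitian := by
  unfold Nb
  rw [Matrix.IsHermitian, Matrix.fromBlocks_conjTranspose]
  simp [hA.eq, hK.eq]

theorem dg_psd {E F : Matrix m m ℂ} (hE : Psd E) (hF : Psd F) : Psd (dg E F) := by
  refine ⟨?_, fun w => ?_⟩
  · unfold dg
    rw [Matrix.IsHermitian, Matrix.fromBlocks_conjTranspose]
    simp [hE.1.eq, hF.1.eq]
  · rw [elim_eq w, q_dg, Complex.add_re]
    exact add_nonneg (hE.2 _) (hF.2 _)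

theorem Nb_sub (A K E F : Matrix m m ℂ) : Nb A K - dg E F = Nb (A + E) (K + F) := by
  unfold Nb dg
  rw [sub_eq_add_neg, Matrix.fromBlocks_neg, Matrix.fromBlocks_add]
  congr 1 <;> simp [sub_eq_add_neg, add_comm]

theorem dg_smul (t : ℂ) (E F : Matrix m m ℂ) : t • dg E F = dg (t • E) (t • F) := by
  unfold dg
  rw [Matrix.fromBlocks_smul]; simp

theorem psd_zero : Psd (0 : Matrix m m ℂ) := ⟨Matrix.isHermitian_zero, fun w => by simp [q_mat_zero]⟩

theorem psd_smul {E : Matrix m m ℂ} (hE : Psd E) {t : ℝ} (ht : 0 ≤ t) : Psd ((t : ℂ) • E) := by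
  refine ⟨?_, fun w => ?_⟩
  · rw [Matrix.IsHermitian, Matrix.conjTranspose_smul, hE.1.eq]; simp
  · rw [q_mat_smul, Complex.re_ofReal_mul]; exact mul_nonneg ht (hE.2 w)

theorem star_of_segs {A K E F : Matrix m m ℂ} (hA : A.IsHermitian) (hK : K.IsHermitian)
    (hE : Psd E) (hF : Psd F)
    (h1 : ∀ t : ℝ, 0 ≤ t → t ≤ 1 → (Nb (A + (t : ℂ) • E) K).det ≠ 0)
    (h2 : ∀ t : ℝ, 0 ≤ t → t ≤ 1 → (Nb (A + E) (K + (t : ℂ) • F)).det ≠ 0) :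
    StarP (Nb A K) (dg E F) := by
  have hN := Nb_herm hA hK
  have hN1 := Nb_herm (hA.add hE.1) hK
  have e1 : Nb A K - dg E 0 = Nb (A + E) K := by rw [Nb_sub, add_zero]
  have e2 : Nb (A + E) K - dg 0 F = Nb (A + E) (K + F) := by rw [Nb_sub, add_zero]
  have e3 : Nb A K - dg E F = Nb (A + E) (K + F) := Nb_sub _ _ _ _
  have d0 : (Nb A K).det ≠ 0 := by simpa using h1 0 le_rfl zero_le_one
  have d1 : (Nb (A + E) K).det ≠ 0 := by simpa using h1 1 zero_le_one le_rfl
  have d2 : (Nb (A + E) (K + F)).det ≠ 0 := by simpa using h2 1 zero_le_one le_rfl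
  have s1 : StarP (Nb A K) (dg E 0) := star_of_segment hN (dg_psd hE psd_zero) fun t h h' => by
    rw [dg_smul, Nb_sub, smul_zero, add_zero]; exact h1 t h h'
  have s2 : StarP (Nb (A + E) K) (dg 0 F) := star_of_segment hN1 (dg_psd psd_zero hF) fun t h h' => by
    rw [dg_smul, Nb_sub, smul_zero, add_zero]; exact h2 t h h'
  apply star_of_inv_mono hN (dg_psd hE hF) d0 (by rw [e3]; exact d2)
  intro p
  have m1 := inv_mono_of_star hN (dg_psd hE psd_zero) d0 (by rw [e1]; exact d1) s1 p
  have m2 := inv_mono_of_star hN1 (dg_psd psd_zero hF) d1 (by rw [e2]; exact d2) s2 p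
  rw [e1, q_mat_sub, Complex.sub_re] at m1
  rw [e2, q_mat_sub, Complex.sub_re] at m2
  rw [e3, q_mat_sub, Complex.sub_re]
  linarith

theorem segs_of_star {A K E F : Matrix m m ℂ} (hE : Psd E) (hF : Psd F)
    (h : StarP (Nb A K) (dg E F)) :
    (∀ t : ℝ, 0 ≤ t → t ≤ 1 → (Nb (A + (t : ℂ) • E) K).det ≠ 0) ∧
    (∀ t : ℝ, 0 ≤ t → t ≤ 1 → (Nb (A + E) (K + (t : ℂ) • F)).det ≠ 0) := by
  have hle : ∀ {E : Matrix m m ℂ}, Psd E → ∀ {t : ℝ}, t ≤ 1 → ∀ w, (q ((t : ℂ) • E) w w).re ≤ (q E w w).re := by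
    intro E hE t ht w
    rw [q_mat_smul, Complex.re_ofReal_mul]
    nlinarith [hE.2 w]
  constructor
  · intro t h0 h1
    have := det_of_star (dg_psd hE hF) (dg_psd (psd_smul hE h0) psd_zero) (fun w => ?_) h
    · rwa [Nb_sub, add_zero] at this
    · rw [elim_eq w, q_dg, q_dg, Complex.add_re, Complex.add_re, q_mat_zero]
      have := hle hE h1 (w ∘ Sum.inl)
      have := hF.2 (w ∘ Sum.inr)
      simp only [Complex.zero_re]; linarith
  · intro t h0 h1
    have := det_of_star (dg_psd hE hF) (dg_psd hE (psd_smul hF h0)) (fun w => ?_) h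
    · rwa [Nb_sub] at this
    · rw [elim_eq w, q_dg, q_dg, Complex.add_re, Complex.add_re]
      have := hle hF h1 (w ∘ Sum.inr)
      linarith

theorem eig_iff {D A B : Matrix (Fin n) (Fin n) ℂ} (hD : D.IsHermitian) (hA : A.IsHermitian)
    (hE : Psd (B - A)) (hd : (1 - D * A).det ≠ 0) :
    eigsRealAndLT ((1 - D * A)⁻¹ * (D * B - 1)) 0 ↔
      ∀ t : ℝ, 0 ≤ t → t ≤ 1 → ∀ x, x = D *ᵥ ((A + (t : ℂ) • (B - A)) *ᵥ x) → x = 0 := by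
  have hspec : ∀ (μ : ℂ) (v : Fin n → ℂ), ((1 - D * A)⁻¹ * (D * B - 1)) *ᵥ v = μ • v ↔
      D *ᵥ ((B - A) *ᵥ v) = (1 + μ) • (v - D *ᵥ (A *ᵥ v)) := by
    intro μ v
    have e1 : ((1 - D * A)⁻¹ * (D * B - 1)) *ᵥ v = μ • v ↔
      (D * B - 1) *ᵥ v = (1 - D * A) *ᵥ (μ • v) := by
      rw [← Matrix.mulVec_mulVec]
      constructor
      · intro h; rw [← h, inv_mulVec_eq hd]
      · intro h; rw [h, inv_mulVec_eq' hd]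
    rw [e1]
    simp only [Matrix.sub_mulVec, Matrix.one_mulVec, ← Matrix.mulVec_mulVec, Matrix.mulVec_smul,
      Matrix.mulVec_sub, add_smul, one_smul, smul_sub]
    constructor
    · intro h
      have : D *ᵥ B *ᵥ v = v + (μ • v - μ • D *ᵥ A *ᵥ v) := by rw [← h]; abel
      rw [this]; abel
    · intro h
      have : D *ᵥ B *ᵥ v = D *ᵥ A *ᵥ v + (v + μ • v - (D *ᵥ A *ᵥ v + μ • D *ᵥ A *ᵥ v)) := by
        rw [← h]; abel
      rw [this]; abel
  have hA0 : ∀ x, x = D *ᵥ (A *ᵥ x) → x = 0 := by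
    intro x hx
    apply mulVec_inj_of_det hd
    rw [Matrix.sub_mulVec, Matrix.one_mulVec, ← Matrix.mulVec_mulVec, ← hx]; simp
  constructor
  · intro h t h0 h1 x hx
    by_contra hx0
    rcases h0.eq_or_lt with h0 | h0
    · subst h0
      apply hx0; apply hA0; simpa using hx
    have h2 := h (((1 - t) / t : ℝ) : ℂ) (mem_spec.2 ⟨x, hx0, (hspec _ _).2 ?_⟩)
    · rw [Complex.ofReal_re, div_lt_iff₀ h0] at h2
      linarith [h2.2]
    · have h3 : x - D *ᵥ (A *ᵥ x) = (t : ℂ) • (D *ᵥ ((B - A) *ᵥ x)) := by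
        nth_rewrite 1 [hx]
        rw [Matrix.add_mulVec, Matrix.mulVec_add, Matrix.smul_mulVec, Matrix.mulVec_smul]; abel
      rw [h3, smul_smul]
      have h4 : (1 + (((1 - t) / t : ℝ) : ℂ)) * (t : ℂ) = 1 := by
        have : (t : ℂ) ≠ 0 := by exact_mod_cast h0.ne'
        push_cast
        field_simp; ring
      rw [h4, one_smul]
  · intro h μ hμ
    obtain ⟨v, hv0, hv⟩ := mem_spec.1 hμ
    rw [hspec] at hv
    by_cases hm : 1 + μ = 0
    · have : μ = -1 := by linear_combination hm
      rw [this]; simp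
    set r : ℂ := (1 + μ)⁻¹ with hr
    have hg : v = D *ᵥ (A *ᵥ v + r • ((B - A) *ᵥ v)) := by
      rw [Matrix.mulVec_add, Matrix.mulVec_smul, hv, smul_smul, inv_mul_cancel₀ hm, one_smul]; abel
    have him : (r * q (B - A) v v).im = 0 := by
      set y := A *ᵥ v + r • ((B - A) *ᵥ v) with hy
      have h1 : (q D y y).im = 0 := q_herm_im hD y
      have h2 : q D y y = star (q A v v + r * q (B - A) v v) := by
        rw [q_herm hD, ← dot_mulVec_herm hD, ← hg, hy, dotProduct_add, dotProduct_smul, smul_eq_mul]; rfl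
      rw [h2, Complex.star_def, Complex.conj_im, Complex.add_im, q_herm_im hA] at h1
      linarith
    have hq := q_herm_im hE.1 v
    rw [Complex.mul_im, hq, mul_zero, zero_add] at him
    have hqne : (q (B - A) v v).re ≠ 0 := by
      intro h0
      have := psd_ker hE h0
      rw [this, smul_zero, add_zero] at hg
      exact hv0 (hA0 v hg)
    have hrim : r.im = 0 := (mul_eq_zero.1 him).resolve_right hqne
    have hrr : r = (r.re : ℂ) := Complex.ext rfl (by simpa using hrim)
    have hμ' : μ = ((r.re⁻¹ - 1 : ℝ) : ℂ) := by
      push_cast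
      rw [← hrr, hr, inv_inv]; ring
    rw [hμ']
    refine ⟨Complex.ofReal_im _, ?_⟩
    rw [Complex.ofReal_re]
    by_contra hc
    push Not at hc
    have hp : 1 ≤ r.re⁻¹ := by linarith
    have hp0 : 0 < r.re := inv_pos.1 (by linarith)
    have hp1 : r.re ≤ 1 := by
      have := inv_le_one_of_one_le₀ hp
      rwa [inv_inv] at this
    apply hv0
    apply h r.re hp0.le hp1
    rw [← hrr, Matrix.add_mulVec, Matrix.smul_mulVec]
    exact hg

end part7

section part8

theorem nif_psd {m : Type*} [Fintype m] [DecidableEq m] {M : ℂ → Matrix m m ℂ} (h : NIF M) {M0 : Matrix m m ℂ}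
    (h0 : Tendsto M (𝓝[≠] 0) (𝓝 M0)) : Psd M0 := by
  refine ⟨herm_of_im fun v => NIF.im_zero h.ni h0 v, fun v => ?_⟩
  have := h.pick h0 1 (by simp) 0 v
  simpa [q_zero_right] using this

/-- closed loop data -/
structure Loop (P C : Matrix (Fin n) (Fin n) (RatFunc ℝ)) (Q K0 : Matrix (Fin n) (Fin n) ℂ) : Prop where
  hp : Plant (evalM P) (cinf P) Q
  hP : IsNI P
  hC : IsSNI C
  hK0 : Tendsto (Plant.kf (evalM P) Q) (𝓝[≠] 0) (𝓝 K0)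

/-- the star condition of the loop -/
def LoopStar (P C : Matrix (Fin n) (Fin n) (RatFunc ℝ)) (Q K0 : Matrix (Fin n) (Fin n) ℂ) : Prop :=
  StarP (Nb (cinf C + Q) (Plant.Kinf (cinf P) Q))
    (dg (evalM C 0 - cinf C) (K0 - Plant.Kinf (cinf P) Q))

theorem nhdsNE_le (a : ℂ) : 𝓝[≠] a ≤ cofinite := nhdsNE_le_cofinite a

theorem ev_np (G : Matrix (Fin n) (Fin n) (RatFunc ℝ)) : ∀ᶠ s in cofinite, ¬ HasPole G s := by
  have := (finite_hasPole G).compl_mem_cofinite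
  exact this

theorem bounded_of_tendsto {α : Type*} {l : Filter α} [l.NeBot] {F : α → ℂ} {L : ℂ}
    (h : Tendsto F l (𝓝 L)) : ∃ᶠ s in l, ‖F s‖ ≤ ‖L‖ + 1 := by
  refine Eventually.frequently ?_
  exact (h.norm.eventually_lt_const (lt_add_one _)).mono fun s hs => hs.le

theorem np_of_tendsto {G : Matrix (Fin n) (Fin n) (RatFunc ℝ)} {F : ℂ → Matrix (Fin n) (Fin n) ℂ} {a : ℂ}
    {L : Matrix (Fin n) (Fin n) ℂ} (hF : Tendsto F (𝓝[≠] a) (𝓝 L))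
    (he : ∀ᶠ s in 𝓝[≠] a, evalM G s = F s) : ¬ HasPole G a := by
  rintro ⟨i, j, h⟩
  have h1 : Tendsto (evalM G) (𝓝[≠] a) (𝓝 L) := hF.congr' (he.mono fun s hs => hs.symm)
  exact not_pole_of_frequently (bounded_of_tendsto ((tendsto_mat.1 h1) i j)) h

theorem proper_of_tendsto {G : Matrix (Fin n) (Fin n) (RatFunc ℝ)} {F : ℂ → Matrix (Fin n) (Fin n) ℂ}
    {L : Matrix (Fin n) (Fin n) ℂ} (hF : Tendsto F (Bornology.cobounded ℂ) (𝓝 L))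
    (he : ∀ᶠ s in Bornology.cobounded ℂ, evalM G s = F s) : Proper G := by
  intro i j
  have h1 : Tendsto (evalM G) (Bornology.cobounded ℂ) (𝓝 L) := hF.congr' (he.mono fun s hs => hs.symm)
  exact proper_of_frequently (bounded_of_tendsto ((tendsto_mat.1 h1) i j))

theorem proper_mul {A B : Matrix (Fin n) (Fin n) (RatFunc ℝ)} (hA : Proper A) (hB : Proper B) :
    Proper (A * B) := by
  refine proper_of_tendsto ((evalM_inf hA).mul (evalM_inf hB)) ?_
  have h1 := (ev_np A).filter_mono (Bornology.le_cofinite ℂ)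
  have h2 := (ev_np B).filter_mono (Bornology.le_cofinite ℂ)
  filter_upwards [h1, h2] with s h1 h2
  exact (evalM_mul h1 h2).1

theorem proper_one_add {A : Matrix (Fin n) (Fin n) (RatFunc ℝ)} (hA : Proper A) : Proper (1 + A) := by
  refine proper_of_tendsto ((evalM_inf hA).const_add 1) ?_
  have h1 := (ev_np A).filter_mono (Bornology.le_cofinite ℂ)
  filter_upwards [h1] with s h1
  have : ¬ HasPole (1 : Matrix (Fin n) (Fin n) (RatFunc ℝ)) s := by
    rintro ⟨i, j, h⟩
    rw [Matrix.one_apply] at h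
    split_ifs at h
    exacts [not_pole_one s h, not_pole_zero s h]
  rw [evalM_add this h1, evalM_one]

theorem np_one_add {A : Matrix (Fin n) (Fin n) (RatFunc ℝ)} {s : ℂ} (hA : ¬ HasPole A s) :
    ¬ HasPole (1 + A) s ∧ evalM (1 + A) s = 1 + evalM A s := by
  have : ¬ HasPole (1 : Matrix (Fin n) (Fin n) (RatFunc ℝ)) s := by
    rintro ⟨i, j, h⟩
    rw [Matrix.one_apply] at h
    split_ifs at h
    exacts [not_pole_one s h, not_pole_zero s h]
  refine ⟨?_, by rw [evalM_add this hA, evalM_one]⟩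
  rintro ⟨i, j, h⟩
  exact not_pole_add (fun h' => this ⟨i, j, h'⟩) (fun h' => hA ⟨i, j, h'⟩) h

theorem S_eq {P C : Matrix (Fin n) (Fin n) (RatFunc ℝ)} (hd : (1 - P * C).det ≠ 0) :
    (1 - P * C)⁻¹ = 1 + (1 - P * C)⁻¹ * P * C := by
  have h := Matrix.nonsing_inv_mul (1 - P * C) (isUnit_iff_ne_zero.2 hd)
  rw [mul_sub, mul_one, ← mul_assoc] at h
  exact sub_eq_iff_eq_add.1 h

theorem ev_S {P C : Matrix (Fin n) (Fin n) (RatFunc ℝ)} (hd : (1 - P * C).det ≠ 0) :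
    ∀ᶠ s in cofinite, ¬ HasPole P s ∧ ¬ HasPole C s ∧
      evalM ((1 - P * C)⁻¹) s * (1 - evalM P s * evalM C s) = 1 ∧
      evalM ((1 - P * C)⁻¹ * P) s = evalM ((1 - P * C)⁻¹) s * evalM P s := by
  filter_upwards [ev_np P, ev_np C, ev_np ((1 - P * C)⁻¹)] with s h1 h2 h3
  refine ⟨h1, h2, ?_, (evalM_mul h3 h1).1⟩
  have e := S_eq hd
  obtain ⟨h4, h5⟩ := evalM_mul h3 h1
  obtain ⟨h6, h7⟩ := evalM_mul h5 h2
  have h8 := (np_one_add h7).2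
  rw [← e, h6, h4] at h8
  rw [mul_sub, mul_one, ← mul_assoc]
  nth_rewrite 1 [h8]
  abel

theorem stable_of_T {P C : Matrix (Fin n) (Fin n) (RatFunc ℝ)} (hd : (1 - P * C).det ≠ 0)
    (hC : MemRHinf C) (hT : MemRHinf ((1 - P * C)⁻¹ * P)) : FeedbackStable P C := by
  have np : ∀ {G : Matrix (Fin n) (Fin n) (RatFunc ℝ)}, MemRHinf G → ∀ s : ℂ, 0 ≤ s.re → ¬ HasPole G s :=
    fun hG s hs ⟨i, j, h⟩ => hG.2 s hs i j h
  have mk : ∀ {G : Matrix (Fin n) (Fin n) (RatFunc ℝ)}, Proper G → (∀ s : ℂ, 0 ≤ s.re → ¬ HasPole G s) →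
      MemRHinf G := fun h1 h2 => ⟨h1, fun s hs i j h => h2 s hs ⟨i, j, h⟩⟩
  have mul : ∀ {A B : Matrix (Fin n) (Fin n) (RatFunc ℝ)}, MemRHinf A → MemRHinf B → MemRHinf (A * B) :=
    fun hA hB => mk (proper_mul hA.1 hB.1) fun s hs => (evalM_mul (np hA s hs) (np hB s hs)).2
  have hS : MemRHinf (1 - P * C)⁻¹ := by
    rw [S_eq hd]
    have := mul hT hC
    exact mk (proper_one_add this.1) fun s hs => (np_one_add (np this s hs)).1
  have h21 := mul hC hS
  have h22 := mul hC hT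
  rw [← mul_assoc] at h22
  refine ⟨hd, ?_, ?_⟩
  · rintro (i | i) (j | j)
    exacts [hS.1 i j, hT.1 i j, h21.1 i j, h22.1 i j]
  · rintro s hs (i | i) (j | j)
    exacts [hS.2 s hs i j, hT.2 s hs i j, h21.2 s hs i j, h22.2 s hs i j]

theorem ev_ne_of_orhp {f : ℂ → ℂ} (hf : Mero f) (h : ∀ s : ℂ, 0 < s.re → f s ≠ 0) {a : ℂ} (ha : 0 ≤ a.re) :
    ∀ᶠ s in 𝓝[≠] a, f s ≠ 0 := by
  rcases (hf.1 a).eventually_eq_zero_or_eventually_ne_zero with h1 | h1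
  · exfalso
    have h2 : Tendsto (fun x : ℝ => a + (x : ℂ)) (𝓝[>] 0) (𝓝[≠] a) := by
      refine tendsto_nhdsWithin_iff.2 ⟨?_, ?_⟩
      · have : Tendsto (fun x : ℝ => a + (x : ℂ)) (𝓝 0) (𝓝 (a + ((0 : ℝ) : ℂ))) :=
          (by fun_prop : Continuous fun x : ℝ => a + (x : ℂ)).tendsto 0
        rw [Complex.ofReal_zero, add_zero] at this
        exact this.mono_left nhdsWithin_le_nhds
      · filter_upwards [self_mem_nhdsWithin] with x hx
        simpa using (ne_of_gt hx)
    obtain ⟨x, hx, hx0⟩ := ((h2.eventually h1).and self_mem_nhdsWithin).exists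
    have hx0' : (0 : ℝ) < x := hx0
    exact h _ (by simp; linarith) hx
  · exact h1

namespace Loop
variable {P C : Matrix (Fin n) (Fin n) (RatFunc ℝ)} {Q K0 : Matrix (Fin n) (Fin n) ℂ}

theorem npC (h : Loop P C Q K0) {s : ℂ} (hs : 0 ≤ s.re) : ¬ HasPole C s :=
  fun ⟨i, j, hh⟩ => h.hC.1.2 s hs i j hh

theorem c_zero (h : Loop P C Q K0) : Tendsto (fun s => evalM C s - cinf C) (𝓝[≠] 0) (𝓝 (evalM C 0 - cinf C)) :=
  ((evalM_cont (h.npC (by simp))).mono_left nhdsWithin_le_nhds).sub_const _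

theorem psdC (h : Loop P C Q K0) : Psd (evalM C 0 - cinf C) :=
  nif_psd (nif_of_ni (ni_of_sni h.hC)) h.c_zero

theorem psdK (h : Loop P C Q K0) : Psd (K0 - Plant.Kinf (cinf P) Q) :=
  nif_psd h.hp.k_nif (h.hK0.sub_const _)

theorem N_herm (h : Loop P C Q K0) : (Nb (cinf C + Q) (Plant.Kinf (cinf P) Q)).IsHermitian :=
  Nb_herm ((cinf_herm (ni_of_sni h.hC)).add h.hp.hQ) h.hp.Kinf_herm

theorem orhp (h : Loop P C Q K0) (hs : LoopStar P C Q K0) {s : ℂ} (hs0 : 0 < s.re) :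
    (1 - evalM P s * evalM C s).det ≠ 0 := by
  apply det_ne_zero_of_inj
  intro x hx
  rw [Matrix.sub_mulVec, Matrix.one_mulVec, sub_eq_zero, ← Matrix.mulVec_mulVec] at hx
  set u := evalM C s *ᵥ x with hu
  have hk : Plant.kf (evalM P) Q s *ᵥ (u + Q *ᵥ x) = x := by
    have h1 : u + Q *ᵥ x = (1 + Q * evalM P s) *ᵥ u := by
      rw [Matrix.add_mulVec, Matrix.one_mulVec, ← Matrix.mulVec_mulVec, ← hx]
    rw [h1, Plant.kf, ← Matrix.mulVec_mulVec, inv_mulVec_eq' (h.hp.detQp hs0), ← hx]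
  have hw : Sum.elim x (u + Q *ᵥ x) = 0 := by
    refine zero_of_star (dg_psd h.psdC h.psdK) hs fun v => ?_
    have hr := q_herm_im h.N_herm (Sum.elim x (u + Q *ᵥ x))
    rw [elim_eq v]
    set a := v ∘ Sum.inl
    set b := v ∘ Sum.inr
    have p1 := (nif_of_ni (ni_of_sni h.hC)).pick h.c_zero s hs0 x a
    have p2 := h.hp.k_nif.pick (h.hK0.sub_const _) s hs0 (u + Q *ᵥ x) b
    have e : ∀ a b, q (Nb (cinf C + Q) (Plant.Kinf (cinf P) Q)) (Sum.elim a b) (Sum.elim x (u + Q *ᵥ x)) =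
        q (evalM C s - cinf C) a x + q (Plant.kf (evalM P) Q s - Plant.Kinf (cinf P) Q) b (u + Q *ᵥ x) := by
      intro a b
      rw [q_Nb]
      simp only [q, Matrix.sub_mulVec, hk, ← hu, Matrix.add_mulVec]
      congr 2; abel
    have e1 : (s * q (Nb (cinf C + Q) (Plant.Kinf (cinf P) Q)) (Sum.elim x (u + Q *ᵥ x)) (Sum.elim x (u + Q *ᵥ x))).re
        = s.re * (q (Nb (cinf C + Q) (Plant.Kinf (cinf P) Q)) (Sum.elim x (u + Q *ᵥ x)) (Sum.elim x (u + Q *ᵥ x))).re := by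
      rw [Complex.mul_re, hr]; ring
    rw [e, mul_add, Complex.add_re] at e1
    rw [q_dg, e x, e a b]
    simp only [Complex.add_re] at e1 ⊢
    rw [← mul_nonneg_iff_of_pos_left hs0]
    linarith
  exact (elim_zero _ _ hw).1

end Loop

end part8

section part9

theorem norm_q_le {m : Type*} [Fintype m] [DecidableEq m] (E : Matrix m m ℂ) (x : m → ℂ) :
    ‖q E x x‖ ≤ (∑ i, ∑ j, ‖E i j‖) * nsq x := by
  rw [q_sum, Finset.sum_mul]
  refine (norm_sum_le _ _).trans (Finset.sum_le_sum fun i _ => ?_)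
  rw [norm_mul, Finset.sum_mul]
  have h1 : ‖∑ j, E i j * x j‖ ≤ ∑ j, ‖E i j‖ * ‖x j‖ :=
    (norm_sum_le _ _).trans (Finset.sum_le_sum fun j _ => (norm_mul _ _).le)
  refine (mul_le_mul_of_nonneg_left h1 (norm_nonneg _)).trans ?_
  rw [Finset.mul_sum]
  refine Finset.sum_le_sum fun j _ => ?_
  rw [norm_star]
  have h2 := nsq_le x i
  have h3 := nsq_le x j
  have h4 : ‖x i‖ * ‖x j‖ ≤ nsq x := by nlinarith [sq_nonneg (‖x i‖ - ‖x j‖)]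
  nlinarith [norm_nonneg (E i j)]

theorem sni_lower {C : Matrix (Fin n) (Fin n) (RatFunc ℝ)} (hC : IsSNI C) {ω : ℝ} (hω : ω ≠ 0) :
    ∃ l : ℝ, 0 < l ∧ ∀ᶠ θ in 𝓝[≠] ω, ∀ x, l * nsq x ≤ - (θ * (q (evalM C (jw θ)) x x).im) := by
  have hq : ∀ x, q ((ω : ℂ) • niKer (evalM C (jw ω))) x x = ((-2 * (ω * (q (evalM C (jw ω)) x x).im) : ℝ) : ℂ) := by
    intro x
    rw [q_mat_smul, q_niKer]; push_cast; ring
  have hpd : ((ω : ℂ) • niKer (evalM C (jw ω))).PosDef := by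
    rw [Matrix.posDef_iff_dotProduct_mulVec]
    refine ⟨herm_of_im fun x => by rw [hq]; exact Complex.ofReal_im _, fun x hx => ?_⟩
    change 0 < q _ _ _
    rw [hq, Complex.zero_lt_real]
    linarith [sni_im hC hω hx]
  obtain ⟨l, hl, hlow⟩ := pd_lower hpd
  refine ⟨l / 4, by positivity, ?_⟩
  have hnp : ¬ HasPole C (jw ω) := fun ⟨i, j, h⟩ => hC.1.2 _ (by rw [jw_re]) i j h
  have hc : Tendsto (fun θ : ℝ => (θ : ℂ) • evalM C (jw θ) - (ω : ℂ) • evalM C (jw ω)) (𝓝[≠] ω) (𝓝 0) := by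
    have h1 : Tendsto (fun θ : ℝ => evalM C (jw θ)) (𝓝[≠] ω) (𝓝 (evalM C (jw ω))) :=
      ((evalM_cont hnp).mono_left nhdsWithin_le_nhds).comp (tendsto_jw ω)
    have h2 : Tendsto (fun θ : ℝ => (θ : ℂ)) (𝓝[≠] ω) (𝓝 (ω : ℂ)) :=
      (Complex.continuous_ofReal.tendsto ω).mono_left nhdsWithin_le_nhds
    have := (h2.smul h1).sub_const ((ω : ℂ) • evalM C (jw ω))
    simpa using this
  have hc2 : Tendsto (fun θ : ℝ => ∑ i, ∑ j, ‖((θ : ℂ) • evalM C (jw θ) - (ω : ℂ) • evalM C (jw ω)) i j‖) (𝓝[≠] ω) (𝓝 0) := by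
    have : (0 : ℝ) = ∑ i : Fin n, ∑ j : Fin n, ‖(0 : Matrix (Fin n) (Fin n) ℂ) i j‖ := by simp
    rw [this]
    exact tendsto_finsetSum _ fun i _ => tendsto_finsetSum _ fun j _ => (tendsto_mat.1 hc i j).norm
  filter_upwards [hc2.eventually_lt_const (show 0 < l / 4 by positivity)] with θ hθ x
  have h1 := norm_q_le ((θ : ℂ) • evalM C (jw θ) - (ω : ℂ) • evalM C (jw ω)) x
  have h2 := hlow x
  rw [hq, Complex.ofReal_re] at h2
  have h3 : ‖q ((θ : ℂ) • evalM C (jw θ) - (ω : ℂ) • evalM C (jw ω)) x x‖ ≤ l / 4 * nsq x :=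
    h1.trans (mul_le_mul_of_nonneg_right hθ.le (nsq_nonneg x))
  have h4 := (Complex.abs_im_le_norm _).trans h3
  rw [q_mat_sub, q_mat_smul, q_mat_smul, Complex.sub_im, Complex.im_ofReal_mul, Complex.im_ofReal_mul] at h4
  have h5 := abs_le.1 h4
  have h6 := nsq_nonneg x
  nlinarith [h5.1, h5.2]

theorem zero_of_evalC {f : RatFunc ℝ} (h : ∃ᶠ s in cofinite, evalC f s = 0) : f = 0 := by
  by_contra hf
  have h1 := (finite_poly (RatFunc.num_ne_zero hf)).union (finite_poles f)
  obtain ⟨s, hs, hs'⟩ := (h.and_eventually h1.compl_mem_cofinite).exists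
  rw [evalC_def] at hs
  apply hs'
  rcases div_eq_zero_iff.1 hs with h2 | h2
  · exact Or.inl h2
  · exact Or.inr h2

theorem det_ratfunc {P C : Matrix (Fin n) (Fin n) (RatFunc ℝ)}
    (h : ∀ s : ℂ, 0 < s.re → (1 - evalM P s * evalM C s).det ≠ 0) : (1 - P * C).det ≠ 0 := by
  intro h0
  obtain ⟨v, hv0, hv⟩ := Matrix.exists_mulVec_eq_zero_iff.2 h0
  set V : Matrix (Fin n) (Fin n) (RatFunc ℝ) := Matrix.of fun i _ => v i with hV
  have hVe : V = P * (C * V) := by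
    rw [Matrix.sub_mulVec, Matrix.one_mulVec, sub_eq_zero, ← Matrix.mulVec_mulVec] at hv
    ext i j
    have := congrFun hv i
    rw [hV, Matrix.of_apply, this]
    rfl
  have hinf : ∃ᶠ s in (cofinite : Filter ℂ), 0 < s.re := by
    rw [Filter.frequently_cofinite_iff_infinite]
    refine Set.infinite_of_injective_forall_mem (f := fun k : ℕ => ((k : ℂ) + 1)) ?_ ?_
    · intro a b hab
      simpa using hab
    · intro k
      simp; positivity
  apply hv0
  ext i
  refine zero_of_evalC ?_
  refine (hinf.and_eventually ((ev_np P).and ((ev_np C).and (ev_np V)))).mono ?_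
  rintro s ⟨hs, h1, h2, h3⟩
  have e : evalM V s = evalM P s * (evalM C s * evalM V s) := by
    nth_rewrite 1 [hVe]
    rw [(evalM_mul h1 (evalM_mul h2 h3).2).1, (evalM_mul h2 h3).1]
  have e2 : (1 - evalM P s * evalM C s) *ᵥ (fun i => evalC (v i) s) = (1 - evalM P s * evalM C s) *ᵥ 0 := by
    rw [Matrix.mulVec_zero, Matrix.sub_mulVec, Matrix.one_mulVec, sub_eq_zero, ← Matrix.mulVec_mulVec]
    ext i'
    have := congrFun (congrFun e i') i
    exact this
  exact congrFun (mulVec_inj_of_det (h s hs) e2) i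

theorem loop_equiv {p : ℂ → Matrix (Fin n) (Fin n) ℂ} {D Q : Matrix (Fin n) (Fin n) ℂ} (h : Plant p D Q) (A : Matrix (Fin n) (Fin n) ℂ)
    (x : Fin n → ℂ) : x = Plant.Kinf D Q *ᵥ ((A + Q) *ᵥ x) ↔ x = D *ᵥ (A *ᵥ x) := by
  constructor
  · intro hx
    have h1 := h.Kinf_eq ((A + Q) *ᵥ x)
    rw [← hx] at h1
    nth_rewrite 1 [h1]
    rw [Matrix.add_mulVec]; congr 1; abel
  · intro hx
    have h1 : (A + Q) *ᵥ x = (1 + Q * D) *ᵥ (A *ᵥ x) := by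
      rw [Matrix.add_mulVec, Matrix.add_mulVec, Matrix.one_mulVec, ← Matrix.mulVec_mulVec, ← hx]
    rw [h1, Plant.Kinf, ← Matrix.mulVec_mulVec, inv_mulVec_eq' h.detQD]
    exact hx

theorem det_one_sub_iff {D A : Matrix (Fin n) (Fin n) ℂ} :
    (1 - D * A).det ≠ 0 ↔ ∀ x, x = D *ᵥ (A *ᵥ x) → x = 0 := by
  constructor
  · intro hd x hx
    apply mulVec_inj_of_det hd
    rw [Matrix.sub_mulVec, Matrix.one_mulVec, ← Matrix.mulVec_mulVec, ← hx]; simp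
  · intro h
    apply det_ne_zero_of_inj
    intro x hx
    rw [Matrix.sub_mulVec, Matrix.one_mulVec, ← Matrix.mulVec_mulVec, sub_eq_zero] at hx
    exact h x hx

theorem kf_id {p Q : Matrix (Fin n) (Fin n) ℂ} (h : (1 + Q * p).det ≠ 0) :
    (1 - p * (1 + Q * p)⁻¹ * Q) * p = p * (1 + Q * p)⁻¹ := by
  have h1 := Matrix.nonsing_inv_mul (1 + Q * p) (isUnit_iff_ne_zero.2 h)
  rw [sub_mul, one_mul, sub_eq_iff_eq_add]
  calc p = p * ((1 + Q * p)⁻¹ * (1 + Q * p)) := by rw [h1, mul_one]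
    _ = _ := by noncomm_ring

theorem W_id {p c Q k : Matrix (Fin n) (Fin n) ℂ} (hk : (1 - k * Q) * p = k) :
    1 - k * (c + Q) = (1 - k * Q) * (1 - p * c) := by
  rw [mul_sub, ← mul_assoc, hk]; noncomm_ring

namespace Loop
variable {P C : Matrix (Fin n) (Fin n) (RatFunc ℝ)} {Q K0 : Matrix (Fin n) (Fin n) ℂ}

theorem det_inf (h : Loop P C Q K0) (hs : LoopStar P C Q K0) : (1 - cinf P * cinf C).det ≠ 0 := by
  rw [det_one_sub_iff]
  intro x hx
  have h1 := (segs_of_star h.psdC h.psdK hs).1 0 le_rfl zero_le_one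
  rw [Complex.ofReal_zero, zero_smul, add_zero, Nb_det] at h1
  exact h1 x ((loop_equiv h.hp _ x).2 hx)

theorem det_zero (h : Loop P C Q K0) (hs : LoopStar P C Q K0) : (1 - K0 * (evalM C 0 + Q)).det ≠ 0 := by
  rw [det_one_sub_iff]
  have h1 := (segs_of_star h.psdC h.psdK hs).2 1 zero_le_one le_rfl
  rw [Nb_det] at h1
  have e1 : cinf C + Q + (evalM C 0 - cinf C) = evalM C 0 + Q := by abel
  have e2 : Plant.Kinf (cinf P) Q + ((1 : ℝ) : ℂ) • (K0 - Plant.Kinf (cinf P) Q) = K0 := by simp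
  rwa [e1, e2] at h1

theorem ev_det (h : Loop P C Q K0) {a : ℂ} (ha : 0 ≤ a.re) : ∀ᶠ s in 𝓝[≠] a, (1 + Q * evalM P s).det ≠ 0 :=
  ev_ne_of_orhp (((MM.const 1).add ((MM.const Q).mul h.hp.mm)).det) (fun s hs => h.hp.detQp hs) ha

theorem T_axis (h : Loop P C Q K0) (hd : (1 - P * C).det ≠ 0) {ω : ℝ} (hω : ω ≠ 0) :
    ¬ HasPole ((1 - P * C)⁻¹ * P) (jw ω) := by
  rintro ⟨i, j, hp⟩
  obtain ⟨l, hl, hlow⟩ := sni_lower h.hC hω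
  obtain ⟨S, hS, hni⟩ := ni_evalM h.hP
  refine not_pole_of_frequently (B := (|ω| + 1) / l) ?_ hp
  refine (tendsto_jw ω).frequently (Eventually.frequently ?_)
  have hb : ∀ᶠ θ in 𝓝[≠] ω, |θ| < |ω| + 1 :=
    (((continuous_abs.tendsto ω).mono_left nhdsWithin_le_nhds).eventually_lt_const (lt_add_one _))
  filter_upwards [hlow, eventually_not_mem_finite hS ω, hb,
    (tendsto_jw ω).eventually ((ev_S hd).filter_mono (nhdsNE_le _))] with θ h1 h2 h3 h4
  obtain ⟨h5, h6, h7, h8⟩ := h4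
  set p := evalM P (jw θ)
  set c := evalM C (jw θ)
  have h7' := mul_eq_one_comm.1 h7
  set x := evalM ((1 - P * C)⁻¹ * P) (jw θ) *ᵥ Pi.single j 1 with hx
  have hxi : ∀ i, x i = evalC (((1 - P * C)⁻¹ * P) i j) (jw θ) := fun i => by
    rw [hx]; simp [evalM]
  rw [← hxi]
  have hxe : x = p *ᵥ (c *ᵥ x + Pi.single j 1) := by
    have e1 : (1 - p * c) *ᵥ x = p *ᵥ Pi.single j 1 := by
      rw [hx, h8, Matrix.mulVec_mulVec, ← mul_assoc, h7', one_mul]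
    rw [Matrix.sub_mulVec, Matrix.one_mulVec, sub_eq_iff_eq_add, ← Matrix.mulVec_mulVec] at e1
    rw [Matrix.mulVec_add, add_comm]; exact e1
  have h9 := hni θ h2 (c *ᵥ x + Pi.single j 1)
  have e2 : q p (c *ᵥ x + Pi.single j 1) (c *ᵥ x + Pi.single j 1) = star (q c x x) + x j := by
    rw [q, ← hxe, star_add, add_dotProduct]
    congr 1
    · rw [q, Matrix.star_dotProduct]
    · simp [dotProduct, Pi.single_apply, apply_ite]
  change θ * (q p _ _).im ≤ 0 at h9
  rw [e2, Complex.add_im, Complex.star_def, Complex.conj_im] at h9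
  have h10 := h1 x
  have h11 : l * nsq x ≤ |θ| * ‖x j‖ := by
    have a1 := Complex.abs_im_le_norm (x j)
    have a2 : -(θ * (x j).im) ≤ |θ| * |(x j).im| := by rw [← abs_mul]; exact neg_le_abs _
    have a3 := mul_le_mul_of_nonneg_left a1 (abs_nonneg θ)
    change l * nsq x ≤ -(θ * (q c x x).im) at h10
    nlinarith
  have h12 : ∀ i, l * ‖x i‖ ^ 2 ≤ (|ω| + 1) * ‖x j‖ := fun i => by
    have a1 := mul_le_mul_of_nonneg_left (nsq_le x i) hl.le
    have a2 := mul_le_mul_of_nonneg_right h3.le (norm_nonneg (x j))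
    linarith
  have hj : ‖x j‖ ≤ (|ω| + 1) / l := by
    rw [le_div_iff₀ hl]
    rcases (norm_nonneg (x j)).eq_or_lt with a | a
    · rw [← a, zero_mul]; positivity
    · have := h12 j
      nlinarith
  have h13 : ‖x i‖ ^ 2 ≤ ((|ω| + 1) / l) ^ 2 := by
    have := h12 i
    have a2 : ‖x i‖ ^ 2 ≤ (|ω| + 1) / l * ‖x j‖ := by
      rw [div_mul_eq_mul_div, le_div_iff₀ hl]; linarith
    refine a2.trans ?_
    rw [sq]
    exact mul_le_mul_of_nonneg_left hj (by positivity)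
  exact (le_abs_self _).trans (abs_le_of_sq_le_sq h13 (by positivity))

theorem stable_of_star (h : Loop P C Q K0) (hs : LoopStar P C Q K0) : FeedbackStable P C := by
  have hd := det_ratfunc fun s hs0 => h.orhp hs hs0
  have hev : ∀ᶠ s in cofinite, evalM ((1 - P * C)⁻¹ * P) s = (1 - evalM P s * evalM C s)⁻¹ * evalM P s := by
    filter_upwards [ev_S hd] with s ⟨_, _, h1, h2⟩
    rw [h2, Matrix.inv_eq_left_inv h1]
  apply stable_of_T hd h.hC.1
  refine ⟨?_, fun s hs0 i j hp => ?_⟩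
  · refine proper_of_tendsto (F := fun s => (1 - evalM P s * evalM C s)⁻¹ * evalM P s)
      ((tendsto_matInv ?_ (h.det_inf hs)).mul (evalM_inf h.hP.1)) (hev.filter_mono (Bornology.le_cofinite ℂ))
    exact ((evalM_inf h.hP.1).mul (evalM_inf h.hC.1.1)).const_sub 1
  · revert hp
    suffices ¬ HasPole ((1 - P * C)⁻¹ * P) s from fun hp => this ⟨i, j, hp⟩
    rcases hs0.eq_or_lt with h0 | h0
    · by_cases hz : s = 0
      · subst hz
        have hk := h.hK0
        have hc : Tendsto (fun s => evalM C s + Q) (𝓝[≠] 0) (𝓝 (evalM C 0 + Q)) :=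
          ((evalM_cont (h.npC (by simp))).mono_left nhdsWithin_le_nhds).add_const Q
        have hw : Tendsto (fun s => 1 - Plant.kf (evalM P) Q s * (evalM C s + Q)) (𝓝[≠] 0)
          (𝓝 (1 - K0 * (evalM C 0 + Q))) := (hk.mul hc).const_sub 1
        refine np_of_tendsto ((tendsto_matInv hw (h.det_zero hs)).mul hk) ?_
        have hdet : Tendsto (fun s => (1 - Plant.kf (evalM P) Q s * (evalM C s + Q)).det) (𝓝[≠] 0)
            (𝓝 (1 - K0 * (evalM C 0 + Q)).det) := ((Continuous.matrix_det continuous_id).tendsto _).comp hw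
        filter_upwards [h.ev_det (a := 0) (by simp), (ev_S hd).filter_mono (nhdsNE_le _),
          hdet.eventually_ne (h.det_zero hs)] with s h1 h2 h3
        obtain ⟨_, _, h4, h5⟩ := h2
        have h4' := mul_eq_one_comm.1 h4
        have hk := kf_id h1
        change (1 - Plant.kf (evalM P) Q s * Q) * evalM P s = Plant.kf (evalM P) Q s at hk
        have e := W_id (c := evalM C s) hk
        set W := 1 - Plant.kf (evalM P) Q s * (evalM C s + Q) with hW
        have e2 : W * evalM ((1 - P * C)⁻¹ * P) s = Plant.kf (evalM P) Q s := by
          rw [h5, ← mul_assoc, e, mul_assoc (1 - Plant.kf (evalM P) Q s * Q), h4', mul_one, hk]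
        rw [← e2, ← mul_assoc, Matrix.nonsing_inv_mul _ (isUnit_iff_ne_zero.2 h3), one_mul]
      · have : s = jw s.im := by
          apply Complex.ext
          · rw [jw_re, h0]
          · rw [jw_im]
        rw [this]
        apply h.T_axis hd
        intro h1
        apply hz
        rw [this, h1, jw_zero]
    · have hp : Tendsto (evalM P) (𝓝[≠] s) (𝓝 (evalM P s)) :=
        (evalM_cont (h.hP.2.1 s h0)).mono_left nhdsWithin_le_nhds
      have hc : Tendsto (evalM C) (𝓝[≠] s) (𝓝 (evalM C s)) :=
        (evalM_cont (h.npC h0.le)).mono_left nhdsWithin_le_nhds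
      exact np_of_tendsto ((tendsto_matInv ((hp.mul hc).const_sub 1) (h.orhp hs h0)).mul hp)
        (hev.filter_mono (nhdsNE_le _))

end Loop

end part9

section part10

theorem finite_exc {p : ℝ → Prop} (h : ∀ a, ∀ᶠ x in 𝓝[≠] a, p x) (hT : ∀ᶠ x in atTop, p x)
    (hB : ∀ᶠ x in atBot, p x) : ∃ S : Set ℝ, S.Finite ∧ ∀ x, x ∉ S → p x := by
  refine ⟨{x | ¬ p x}, ?_, fun x hx => not_not.1 hx⟩
  obtain ⟨b, hb⟩ := eventually_atTop.1 hT
  obtain ⟨a, ha⟩ := eventually_atBot.1 hB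
  by_contra hinf
  have hsub : {x | ¬ p x} ⊆ Set.Icc a b := by
    intro x hx
    constructor
    · by_contra hlt; exact hx (ha x (not_le.1 hlt).le)
    · by_contra hlt; exact hx (hb x (not_le.1 hlt).le)
  obtain ⟨x, -, hx⟩ := Set.Infinite.exists_accPt_of_subset_isCompact hinf isCompact_Icc hsub
  rw [accPt_iff_frequently_nhdsNE] at hx
  exact hx ((h x).mono fun y hy hy' => hy' hy)

section blocks
variable {m : Type*} [Fintype m] [DecidableEq m]

theorem tendsto_blocks {α : Type*} {l : Filter α} {A B C D : α → Matrix m m ℂ} {A' B' C' D' : Matrix m m ℂ}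
    (hA : Tendsto A l (𝓝 A')) (hB : Tendsto B l (𝓝 B')) (hC : Tendsto C l (𝓝 C')) (hD : Tendsto D l (𝓝 D')) :
    Tendsto (fun s => Matrix.fromBlocks (A s) (B s) (C s) (D s)) l (𝓝 (Matrix.fromBlocks A' B' C' D')) := by
  rw [tendsto_mat] at *
  rintro (i | i) (j | j)
  exacts [hA i j, hB i j, hC i j, hD i j]

theorem mm_blocks {A B C D : ℂ → Matrix m m ℂ} (hA : MM A) (hB : MM B) (hC : MM C) (hD : MM D) :
    MM (fun s => Matrix.fromBlocks (A s) (B s) (C s) (D s)) := by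
  rintro (i | i) (j | j)
  exacts [hA i j, hB i j, hC i j, hD i j]

/-- inverse of the block loop matrix -/
def Yb (S T c Q : Matrix m m ℂ) : Matrix (m ⊕ m) (m ⊕ m) ℂ :=
  Matrix.fromBlocks T (S + T * Q) (1 + (c + Q) * T) ((c + Q) * (S + T * Q))

theorem tendsto_Yb {α : Type*} {l : Filter α} {S T c : α → Matrix m m ℂ} {S' T' c' : Matrix m m ℂ} (Q : Matrix m m ℂ)
    (hS : Tendsto S l (𝓝 S')) (hT : Tendsto T l (𝓝 T')) (hc : Tendsto c l (𝓝 c')) :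
    Tendsto (fun s => Yb (S s) (T s) (c s) Q) l (𝓝 (Yb S' T' c' Q)) :=
  tendsto_blocks hT (hS.add (hT.mul_const Q)) (((hc.add_const Q).mul hT).const_add 1)
    ((hc.add_const Q).mul (hS.add (hT.mul_const Q)))

theorem mm_Yb {S T c : ℂ → Matrix m m ℂ} (Q : Matrix m m ℂ) (hS : MM S) (hT : MM T) (hc : MM c) :
    MM (fun s => Yb (S s) (T s) (c s) Q) := by
  have hW : MM (fun s => S s + T s * Q) := hS.add (hT.mul (MM.const Q))
  have hc' : MM (fun s => c s + Q) := hc.add (MM.const Q)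
  exact mm_blocks hT hW ((MM.const 1).add (hc'.mul hT)) (hc'.mul hW)

theorem diff_Yb {S T c : ℂ → Matrix m m ℂ} (Q : Matrix m m ℂ) {s : ℂ}
    (hS : ∀ i j, DifferentiableAt ℂ (fun s => S s i j) s)
    (hT : ∀ i j, DifferentiableAt ℂ (fun s => T s i j) s)
    (hc : ∀ i j, DifferentiableAt ℂ (fun s => c s i j) s) (i j : m ⊕ m) :
    DifferentiableAt ℂ (fun s => Yb (S s) (T s) (c s) Q i j) s := by
  have hW : ∀ i j, DifferentiableAt ℂ (fun s => (S s + T s * Q) i j) s := fun i j =>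
    (hS i j).add (diffAt_mul (G := fun _ => Q) hT (fun i j => differentiableAt_const _) i j)
  have hc' : ∀ i j, DifferentiableAt ℂ (fun s => (c s + Q) i j) s := fun i j =>
    (hc i j).add (differentiableAt_const _)
  rcases i with i | i <;> rcases j with j | j
  · exact hT i j
  · exact hW i j
  · exact (differentiableAt_const ((1 : Matrix m m ℂ) i j)).add (diffAt_mul hc' hT i j)
  · exact diffAt_mul hc' hW i j

theorem Nb_Yb {S T c Q k p : Matrix m m ℂ} (hk : (1 - k * Q) * p = k) (hS : S * (1 - p * c) = 1)
    (hT : T = S * p) : Nb (c + Q) k * Yb S T c Q = 1 := by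
  have hS' := mul_eq_one_comm.1 hS
  have e : 1 - k * (c + Q) = (1 - k * Q) * (1 - p * c) := by
    rw [mul_sub, ← mul_assoc, hk]; noncomm_ring
  have e1 : (1 - k * (c + Q)) * S = 1 - k * Q := by rw [e, mul_assoc, hS', mul_one]
  have e2 : (1 - k * (c + Q)) * T = k := by rw [hT, ← mul_assoc, e1, hk]
  rw [Nb, Yb, Matrix.fromBlocks_multiply, ← Matrix.fromBlocks_one]
  congr 1
  · noncomm_ring
  · noncomm_ring
  · calc 1 * T + -k * (1 + (c + Q) * T) = (1 - k * (c + Q)) * T - k := by noncomm_ring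
      _ = 0 := by rw [e2, sub_self]
  · calc 1 * (S + T * Q) + -k * ((c + Q) * (S + T * Q))
        = (1 - k * (c + Q)) * S + (1 - k * (c + Q)) * T * Q := by noncomm_ring
      _ = 1 := by rw [e1, e2]; abel

end blocks

namespace Loop
variable {P C : Matrix (Fin n) (Fin n) (RatFunc ℝ)} {Q K0 : Matrix (Fin n) (Fin n) ℂ}

theorem star_of_stable (h : Loop P C Q K0) (hst : FeedbackStable P C) : LoopStar P C Q K0 := by
  obtain ⟨hd, hH⟩ := hst
  have hS : MemRHinf (1 - P * C)⁻¹ :=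
    ⟨fun i j => hH.1 (Sum.inl i) (Sum.inl j), fun s hs i j => hH.2 s hs (Sum.inl i) (Sum.inl j)⟩
  have hT : MemRHinf ((1 - P * C)⁻¹ * P) :=
    ⟨fun i j => hH.1 (Sum.inl i) (Sum.inr j), fun s hs i j => hH.2 s hs (Sum.inl i) (Sum.inr j)⟩
  have np : ∀ {G : Matrix (Fin n) (Fin n) (RatFunc ℝ)}, MemRHinf G → ∀ s : ℂ, 0 ≤ s.re → ¬ HasPole G s :=
    fun hG s hs ⟨i, j, h⟩ => hG.2 s hs i j h
  have tc : ∀ {G : Matrix (Fin n) (Fin n) (RatFunc ℝ)}, MemRHinf G → ∀ s : ℂ, 0 ≤ s.re →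
      Tendsto (evalM G) (𝓝[≠] s) (𝓝 (evalM G s)) :=
    fun hG s hs => (evalM_cont (np hG s hs)).mono_left nhdsWithin_le_nhds
  have df : ∀ {G : Matrix (Fin n) (Fin n) (RatFunc ℝ)}, MemRHinf G → ∀ s : ℂ, 0 ≤ s.re → ∀ i j,
      DifferentiableAt ℂ (fun s => evalM G s i j) s :=
    fun hG s hs i j => diffAt_evalC (hG.2 s hs i j)
  set Y : ℂ → Matrix (Fin n ⊕ Fin n) (Fin n ⊕ Fin n) ℂ := fun s =>
    Yb (evalM (1 - P * C)⁻¹ s) (evalM ((1 - P * C)⁻¹ * P) s) (evalM C s) Q with hY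
  set N : ℂ → Matrix (Fin n ⊕ Fin n) (Fin n ⊕ Fin n) ℂ := fun s =>
    Nb (evalM C s + Q) (Plant.kf (evalM P) Q s) with hN
  have hYt : ∀ s : ℂ, 0 ≤ s.re → Tendsto Y (𝓝[≠] s) (𝓝 (Y s)) := fun s hs =>
    tendsto_Yb Q (tc hS s hs) (tc hT s hs) (tc h.hC.1 s hs)
  obtain ⟨Yi, hYi⟩ : ∃ Yi, Tendsto Y (Bornology.cobounded ℂ) (𝓝 Yi) :=
    ⟨_, tendsto_Yb Q (evalM_inf hS.1) (evalM_inf hT.1) (evalM_inf h.hC.1.1)⟩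
  have hNt : ∀ {l : Filter ℂ} {A K}, Tendsto (evalM C) l (𝓝 A) → Tendsto (Plant.kf (evalM P) Q) l (𝓝 K) →
      Tendsto N l (𝓝 (Nb (A + Q) K)) := fun hA hK =>
    tendsto_blocks (hA.add_const Q).neg tendsto_const_nhds tendsto_const_nhds hK.neg
  have hNY : ∀ s, (1 + Q * evalM P s).det ≠ 0 →
      evalM ((1 - P * C)⁻¹) s * (1 - evalM P s * evalM C s) = 1 →
      evalM ((1 - P * C)⁻¹ * P) s = evalM ((1 - P * C)⁻¹) s * evalM P s → N s * Y s = 1 :=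
    fun s h1 h2 h3 => Nb_Yb (kf_id h1) h2 h3
  have evNY : ∀ a : ℂ, 0 ≤ a.re → ∀ᶠ s in 𝓝[≠] a, N s * Y s = 1 := by
    intro a ha
    filter_upwards [h.ev_det ha, (ev_S hd).filter_mono (nhdsNE_le a)] with s h1 h2
    exact hNY s h1 h2.2.2.1 h2.2.2.2
  have hdi : ∀ᶠ s in Bornology.cobounded ℂ, (1 + Q * evalM P s).det ≠ 0 := by
    have h1 : Tendsto (fun s => 1 + Q * evalM P s) (Bornology.cobounded ℂ) (𝓝 (1 + Q * cinf P)) :=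
      (h.hp.p_inf.const_mul Q).const_add 1
    have h2 : Tendsto (fun s => (1 + Q * evalM P s).det) (Bornology.cobounded ℂ) (𝓝 (1 + Q * cinf P).det) :=
      ((Continuous.matrix_det continuous_id).tendsto _).comp h1
    exact h2.eventually_ne h.hp.detQD
  have evNYi : ∀ᶠ s in Bornology.cobounded ℂ, N s * Y s = 1 := by
    filter_upwards [hdi, (ev_S hd).filter_mono (Bornology.le_cofinite ℂ)] with s h1 h2
    exact hNY s h1 h2.2.2.1 h2.2.2.2
  have hN0 : Nb (evalM C 0 + Q) K0 * Y 0 = 1 := by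
    have h1 := (hNt (tc h.hC.1 0 (by simp)) h.hK0).mul (hYt 0 (by simp))
    exact tendsto_nhds_unique h1 (tendsto_const_nhds.congr' ((evNY 0 (by simp)).mono fun s hs => hs.symm))
  have hNi : Nb (cinf C + Q) (Plant.Kinf (cinf P) Q) * Yi = 1 := by
    have h1 := (hNt (evalM_inf h.hC.1.1) h.hp.k_inf).mul hYi
    exact tendsto_nhds_unique h1 (tendsto_const_nhds.congr' (evNYi.mono fun s hs => hs.symm))
  have hYi' : (Nb (cinf C + Q) (Plant.Kinf (cinf P) Q))⁻¹ = Yi := Matrix.inv_eq_right_inv hNi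
  have hY0' : (Nb (evalM C 0 + Q) K0)⁻¹ = Y 0 := Matrix.inv_eq_right_inv hN0
  have hYih : Yi.IsHermitian := by rw [← hYi']; exact h.N_herm.inv
  have hdet : ∀ {A B : Matrix (Fin n ⊕ Fin n) (Fin n ⊕ Fin n) ℂ}, A * B = 1 → A.det ≠ 0 := by
    intro A B hAB h0
    have := congrArg Matrix.det hAB
    rw [Matrix.det_mul, h0, zero_mul, Matrix.det_one] at this
    exact zero_ne_one this
  have hsub : Nb (cinf C + Q) (Plant.Kinf (cinf P) Q) - dg (evalM C 0 - cinf C) (K0 - Plant.Kinf (cinf P) Q)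
      = Nb (evalM C 0 + Q) K0 := by
    rw [Nb_sub]; congr 1 <;> abel
  have hnif : NIF (fun s => Y s - Yi) := by
    refine ⟨(mm_Yb Q (mm_evalM _) (mm_evalM _) (mm_evalM _)).sub (MM.const _), fun s hs i j => ?_, fun ω => ?_, ?_, ?_⟩
    · exact (diff_Yb Q (df hS s hs.le) (df hT s hs.le) (df h.hC.1 s hs.le) i j).sub_const _
    · refine ⟨0, fun w => by rw [q_mat_zero], ?_⟩
      have hid : Tendsto (fun s : ℂ => s) (𝓝[≠] (jw ω)) (𝓝 (jw ω)) := tendsto_id.mono_left nhdsWithin_le_nhds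
      have h1 := ((hid.sub_const (jw ω)).mul hid).smul ((hYt (jw ω) (by rw [jw_re])).sub_const Yi)
      simpa using h1
    · simpa using hYi.sub_const Yi
    · obtain ⟨S1, hS1, hk⟩ := h.hp.k_ni
      obtain ⟨S2, hS2, hc⟩ := ni_evalM (ni_of_sni h.hC)
      have hex : ∃ S3 : Set ℝ, S3.Finite ∧ ∀ ω, ω ∉ S3 → N (jw ω) * Y (jw ω) = 1 :=
        finite_exc (fun ω => (tendsto_jw ω).eventually (evNY _ (by rw [jw_re])))
          (tendsto_jw_atTop.eventually evNYi) (tendsto_jw_atBot.eventually evNYi)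
      obtain ⟨S3, hS3, h3⟩ := hex
      refine ⟨S1 ∪ S2 ∪ S3, (hS1.union hS2).union hS3, fun ω hω f => ?_⟩
      simp only [Set.mem_union, not_or] at hω
      obtain ⟨⟨hω1, hω2⟩, hω3⟩ := hω
      rw [q_mat_sub, Complex.sub_im, q_herm_im hYih, sub_zero]
      obtain ⟨x, u, hw⟩ : ∃ x u, Y (jw ω) *ᵥ f = Sum.elim x u := ⟨_, _, elim_eq _⟩
      have hf : f = N (jw ω) *ᵥ Sum.elim x u := by
        rw [← hw, Matrix.mulVec_mulVec, h3 ω hω3, Matrix.one_mulVec]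
      have e1 : q (Y (jw ω)) f f = star (q (N (jw ω)) (Sum.elim x u) (Sum.elim x u)) := by
        rw [q, hw, q, ← hf, Matrix.star_dotProduct]
      have e2 : q (N (jw ω)) (Sum.elim x u) (Sum.elim x u) =
          (star x ⬝ᵥ u + star (star x ⬝ᵥ u)) - q (evalM C (jw ω)) x x - q Q x x
            - q (Plant.kf (evalM P) Q (jw ω) - Plant.Kinf (cinf P) Q) u u - q (Plant.Kinf (cinf P) Q) u u := by
        rw [hN, q_Nb, ← Matrix.star_dotProduct]
        simp only [q, dotProduct_sub, Matrix.add_mulVec, Matrix.sub_mulVec, dotProduct_add]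
        ring
      rw [e1, e2]
      have h4 := hk ω hω1 u
      have h5 := hc ω hω2 x
      simp only [Complex.star_def, Complex.conj_im, Complex.sub_im, Complex.add_im, q_herm_im h.hp.hQ,
        q_herm_im h.hp.Kinf_herm]
      linarith
  have hpsd := nif_psd hnif ((hYt 0 (by simp)).sub_const Yi)
  apply star_of_inv_mono h.N_herm (dg_psd h.psdC h.psdK) (hdet hNi) (by rw [hsub]; exact hdet hN0)
  intro p
  rw [hsub, hY0', hYi']
  exact hpsd.2 p

end Loop

end part10

section part11

namespace Loop
variable {P C : Matrix (Fin n) (Fin n) (RatFunc ℝ)} {Q K0 : Matrix (Fin n) (Fin n) ℂ}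

theorem seg1_iff (h : Loop P C Q K0) :
    (∀ t : ℝ, 0 ≤ t → t ≤ 1 →
      (Nb (cinf C + Q + (t : ℂ) • (evalM C 0 - cinf C)) (Plant.Kinf (cinf P) Q)).det ≠ 0) ↔
    ∀ t : ℝ, 0 ≤ t → t ≤ 1 → ∀ x, x = cinf P *ᵥ ((cinf C + (t : ℂ) • (evalM C 0 - cinf C)) *ᵥ x) → x = 0 := by
  refine forall_congr' fun t => forall_congr' fun _ => forall_congr' fun _ => ?_
  rw [Nb_det]
  refine forall_congr' fun x => ?_
  rw [add_right_comm, loop_equiv h.hp]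

theorem seg2_iff :
    (∀ t : ℝ, 0 ≤ t → t ≤ 1 →
      (Nb (cinf C + Q + (evalM C 0 - cinf C))
        (Plant.Kinf (cinf P) Q + (t : ℂ) • (K0 - Plant.Kinf (cinf P) Q))).det ≠ 0) ↔
    ∀ t : ℝ, 0 ≤ t → t ≤ 1 → ∀ x, x = (evalM C 0 + Q) *ᵥ
      ((Plant.Kinf (cinf P) Q + (t : ℂ) • (K0 - Plant.Kinf (cinf P) Q)) *ᵥ x) → x = 0 := by
  have e1 : cinf C + Q + (evalM C 0 - cinf C) = evalM C 0 + Q := by abel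
  rw [e1]
  refine forall_congr' fun t => forall_congr' fun _ => forall_congr' fun _ => ?_
  rw [Nb_det']

theorem c_herm (h : Loop P C Q K0) : (cinf C).IsHermitian := cinf_herm (ni_of_sni h.hC)

theorem c0_herm (h : Loop P C Q K0) : (evalM C 0).IsHermitian := by
  have := h.psdC.1.add h.c_herm
  simpa using this

theorem star_iff (h : Loop P C Q K0) : LoopStar P C Q K0 ↔
    (∀ t : ℝ, 0 ≤ t → t ≤ 1 → ∀ x, x = cinf P *ᵥ ((cinf C + (t : ℂ) • (evalM C 0 - cinf C)) *ᵥ x) → x = 0) ∧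
    (∀ t : ℝ, 0 ≤ t → t ≤ 1 → ∀ x, x = (evalM C 0 + Q) *ᵥ
      ((Plant.Kinf (cinf P) Q + (t : ℂ) • (K0 - Plant.Kinf (cinf P) Q)) *ᵥ x) → x = 0) := by
  rw [← h.seg1_iff, ← seg2_iff]
  constructor
  · intro hs; exact segs_of_star h.psdC h.psdK hs
  · rintro ⟨h1, h2⟩
    exact star_of_segs (h.c_herm.add h.hp.hQ) h.hp.Kinf_herm h.psdC h.psdK h1 h2

theorem inv_id (h : Loop P C Q K0) (hd : (1 - evalM C 0 * cinf P).det ≠ 0) :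
    (1 - (evalM C 0 + Q) * Plant.Kinf (cinf P) Q).det ≠ 0 ∧
    (1 - (evalM C 0 + Q) * Plant.Kinf (cinf P) Q)⁻¹ = (1 + Q * cinf P) * (1 - evalM C 0 * cinf P)⁻¹ := by
  have h1 := Matrix.mul_nonsing_inv (1 + Q * cinf P) (isUnit_iff_ne_zero.2 h.hp.detQD)
  have h1' := Matrix.nonsing_inv_mul (1 + Q * cinf P) (isUnit_iff_ne_zero.2 h.hp.detQD)
  have h2 := Matrix.nonsing_inv_mul (1 - evalM C 0 * cinf P) (isUnit_iff_ne_zero.2 hd)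
  have e : 1 - (evalM C 0 + Q) * Plant.Kinf (cinf P) Q = (1 - evalM C 0 * cinf P) * (1 + Q * cinf P)⁻¹ := by
    rw [Plant.Kinf]
    nth_rewrite 1 [← h1]
    noncomm_ring
  have e2 : (1 + Q * cinf P) * (1 - evalM C 0 * cinf P)⁻¹ *
      (1 - (evalM C 0 + Q) * Plant.Kinf (cinf P) Q) = 1 := by
    rw [e, mul_assoc, ← mul_assoc _ _ (1 + Q * cinf P)⁻¹, h2, one_mul, h1]
  refine ⟨?_, Matrix.inv_eq_left_inv e2⟩
  intro h0
  have := congrArg Matrix.det e2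
  rw [Matrix.det_mul, h0, mul_zero, Matrix.det_one] at this
  exact zero_ne_one this

theorem lim_zero (h : Loop P C Q K0) (hd : (1 - evalM C 0 * cinf P).det ≠ 0) :
    Tendsto (fun s : ℂ => (1 + Q * cinf P) * (1 - evalM C s * cinf P)⁻¹ *
        (evalM C s * evalM P s - 1) * (1 + Q * evalM P s)⁻¹) (𝓝[≠] 0)
      (𝓝 ((1 - (evalM C 0 + Q) * Plant.Kinf (cinf P) Q)⁻¹ * ((evalM C 0 + Q) * K0 - 1))) := by
  rw [(h.inv_id hd).2]
  have hc : Tendsto (evalM C) (𝓝[≠] 0) (𝓝 (evalM C 0)) :=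
    (evalM_cont (h.npC (by simp))).mono_left nhdsWithin_le_nhds
  have h1 : Tendsto (fun s => (1 - evalM C s * cinf P)⁻¹) (𝓝[≠] 0) (𝓝 (1 - evalM C 0 * cinf P)⁻¹) :=
    tendsto_matInv ((hc.mul_const _).const_sub 1) hd
  have h2 := (h1.const_mul (1 + Q * cinf P)).mul (((hc.add_const Q).mul h.hK0).sub_const 1)
  refine h2.congr' ?_
  filter_upwards [h.ev_det (a := 0) (by simp)] with s hs
  have h3 := Matrix.mul_nonsing_inv (1 + Q * evalM P s) (isUnit_iff_ne_zero.2 hs)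
  have e : (evalM C s + Q) * Plant.kf (evalM P) Q s - 1 =
      (evalM C s * evalM P s - 1) * (1 + Q * evalM P s)⁻¹ := by
    rw [Plant.kf]
    nth_rewrite 2 [← h3]
    noncomm_ring
  rw [e, ← mul_assoc]

theorem core (h : Loop P C Q K0) : FeedbackStable P C ↔
    ((1 - cinf P * cinf C).det ≠ 0 ∧
      eigsRealAndLT ((1 - cinf P * cinf C)⁻¹ * (cinf P * evalM C 0 - 1)) 0 ∧
      ∃ L, Tendsto (fun s : ℂ => (1 + Q * cinf P) * (1 - evalM C s * cinf P)⁻¹ *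
        (evalM C s * evalM P s - 1) * (1 + Q * evalM P s)⁻¹) (𝓝[≠] 0) (𝓝 L) ∧ eigsRealAndLT L 0) := by
  have hst : FeedbackStable P C ↔ LoopStar P C Q K0 := ⟨h.star_of_stable, h.stable_of_star⟩
  have hD0 : (∀ t : ℝ, 0 ≤ t → t ≤ 1 → ∀ x,
      x = cinf P *ᵥ ((cinf C + (t : ℂ) • (evalM C 0 - cinf C)) *ᵥ x) → x = 0) →
      (1 - evalM C 0 * cinf P).det ≠ 0 := by
    intro h1
    rw [Matrix.det_one_sub_mul_comm, det_one_sub_iff]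
    simpa using h1 1 zero_le_one le_rfl
  rw [hst]
  constructor
  · intro hs
    have hdi := h.det_inf hs
    obtain ⟨h1, h2⟩ := h.star_iff.1 hs
    have hd := hD0 h1
    refine ⟨hdi, (eig_iff h.hp.hD h.c_herm h.psdC hdi).2 h1, _, h.lim_zero hd, ?_⟩
    exact (eig_iff (h.c0_herm.add h.hp.hQ) h.hp.Kinf_herm h.psdK (h.inv_id hd).1).2 h2
  · rintro ⟨hdi, hb, L, hL, hLe⟩
    have h1 := (eig_iff h.hp.hD h.c_herm h.psdC hdi).1 hb
    have hd := hD0 h1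
    have hLL := tendsto_nhds_unique hL (h.lim_zero hd)
    rw [hLL] at hLe
    exact h.star_iff.2 ⟨h1,
      (eig_iff (h.c0_herm.add h.hp.hQ) h.hp.Kinf_herm h.psdK (h.inv_id hd).1).1 hLe⟩

end Loop

theorem map_one_sub (A B : Matrix (Fin n) (Fin n) ℝ) :
    (1 - A * B).map Complex.ofReal = 1 - A.map Complex.ofReal * B.map Complex.ofReal := by
  rw [← map_mul_ofReal]
  ext i j
  simp only [Matrix.map_apply, Matrix.sub_apply, Matrix.one_apply]
  split_ifs <;> simp

theorem map_sub_one (A B : Matrix (Fin n) (Fin n) ℝ) :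
    (A * B - 1).map Complex.ofReal = A.map Complex.ofReal * B.map Complex.ofReal - 1 := by
  rw [← map_mul_ofReal]
  ext i j
  simp only [Matrix.map_apply, Matrix.sub_apply, Matrix.one_apply]
  split_ifs <;> simp

theorem det_map_ofReal (A : Matrix (Fin n) (Fin n) ℝ) :
    (A.map Complex.ofReal).det = ((A.det : ℝ) : ℂ) :=
  (RingHom.map_det Complex.ofRealHom A).symm

theorem inv_map_ofReal {A : Matrix (Fin n) (Fin n) ℝ} (h : A.det ≠ 0) :
    (A⁻¹).map Complex.ofReal = (A.map Complex.ofReal)⁻¹ := by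
  symm
  apply Matrix.inv_eq_left_inv
  rw [← map_mul_ofReal, Matrix.nonsing_inv_mul A (isUnit_iff_ne_zero.2 h)]
  ext i j
  simp only [Matrix.map_apply, Matrix.one_apply]
  split_ifs <;> simp

end part11

/-- feedback stability of an NI plant (possibly with a pole at
the origin) with an SNI controller. -/
theorem feedback_stability_iff_origin_pole {n : ℕ} (P C : Matrix (Fin n) (Fin n) (RatFunc ℝ))
    (Ψ : Matrix (Fin n) (Fin n) ℝ)
    (hP : IsNI P) (hC : IsSNI C)
    (hΨsym : Ψᵀ = Ψ) (hΨneg : (-Ψ).PosDef)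
    (hgain : maxEigLT (evalInf P * Ψ) 1) :
    FeedbackStable P C ↔
      ((1 - evalInf P * evalInf C).det ≠ 0 ∧
       maxEigLT ((1 - evalInf P * evalInf C)⁻¹ * (evalInf P * evalR C 0 - 1)) 0 ∧
       ∃ L : Matrix (Fin n) (Fin n) ℂ,
         Filter.Tendsto
           (fun s : ℂ =>
             ((1 : Matrix (Fin n) (Fin n) ℂ) -
                 Ψ.map Complex.ofReal * (evalInf P).map Complex.ofReal) *
               (1 - evalM C s * (evalInf P).map Complex.ofReal)⁻¹ *
               (evalM C s * evalM P s - 1) *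
               (1 - Ψ.map Complex.ofReal * evalM P s)⁻¹)
           (𝓝[≠] (0 : ℂ)) (𝓝 L) ∧
         eigsRealAndLT L 0) := by
  have hp := plant_of hP hΨneg hgain
  obtain ⟨K0, hK0⟩ := hp.k_zero
  have L : Loop P C (-(Ψ.map Complex.ofReal)) K0 := ⟨hp, hP, hC, hK0⟩
  have ha : (1 - evalInf P * evalInf C).det ≠ 0 ↔ (1 - cinf P * cinf C).det ≠ 0 := by
    rw [cinf, cinf, ← map_one_sub, det_map_ofReal, Complex.ofReal_ne_zero]
  have hb : (1 - evalInf P * evalInf C).det ≠ 0 →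
      (maxEigLT ((1 - evalInf P * evalInf C)⁻¹ * (evalInf P * evalR C 0 - 1)) 0 ↔
      eigsRealAndLT ((1 - cinf P * cinf C)⁻¹ * (cinf P * evalM C 0 - 1)) 0) := by
    intro hd
    rw [maxEigLT, map_mul_ofReal, inv_map_ofReal hd, map_one_sub, map_sub_one, evalR_zero]
    rfl
  have hneg : ∀ X : Matrix (Fin n) (Fin n) ℂ,
      (1 : Matrix (Fin n) (Fin n) ℂ) + -(Ψ.map Complex.ofReal) * X = 1 - Ψ.map Complex.ofReal * X := by
    intro X; rw [neg_mul, sub_eq_add_neg]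
  have hcore := L.core
  simp only [hneg] at hcore
  rw [hcore, ← ha]
  refine and_congr_right fun hd => ?_
  rw [hb hd]
  rfl

end NIControl
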